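/- arXiv:0902.4270 — 2 statements merged into one kernel-verified Lean document; each statement's English description precedes it below -/
import Mathlib

section
/- Assume char(F) = 3. Let 1 ≤ s ≤ 4, let x_1,…,x_{8−2s} be pairwise different letters among x_1,…,x_d (so d ≥ 8−2s), let a_1,…,a_{s−1}, v, w ∈ M be words, and let u_1,…,u_{s+1} ∈ M_1 satisfy deg_{x_i}(u_1 u_2 ⋯ u_{s+1}) = 3 for every 1 ≤ i ≤ 8−2s. Then the product of the 2s+1 elements vw − wv, ā_1, …, ā_{s−1}, u_1, …, u_{s+1} taken in any order equals zero in A_{3,d}, where ā = a − a^T. -/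
open FreeAlgebra MulOpposite

/-- The alphabet: `(k, false)` is the letter `x_{k+1}`, `(k, true)` is `x_{k+1}ᵀ`. -/
abbrev Ltr (d : ℕ) := Fin d × Bool

/-- The free (unital) associative algebra on the `2d` letters.  The free non-unital
algebra `M_F` sits inside it as the span of the nonempty words. -/
abbrev FA (F : Type) [Field F] (d : ℕ) := FreeAlgebra F (Ltr d)

variable (F : Type) [Field F] (d : ℕ)

/-- The word in the free algebra corresponding to a list of letters
(the empty list gives `1`, the unit). -/
def wordOf (l : List (Ltr d)) : FA F d := (l.map (FreeAlgebra.ι F)).prod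

/-- The transpose: the linear anti-automorphism with `x ↦ xᵀ`, `xᵀ ↦ x`. -/
def tp (a : FA F d) : FA F d :=
  ((FreeAlgebra.lift F fun p : Ltr d => op (FreeAlgebra.ι F (p.1, !p.2))) a).unop

/-- `ā = a - aᵀ`. -/
def bar (a : FA F d) : FA F d := a - tp F d a

/-- `T(a,b,c) = a b̄ c̄ + b̄ aᵀ c̄ + b̄ c̄ a`. -/
def Trel (a b c : FA F d) : FA F d :=
  a * bar F d b * bar F d c + bar F d b * tp F d a * bar F d c + bar F d b * bar F d c * a

/-- The copy of the free non-unital algebra `M_F`, i.e. the span of the nonempty words. -/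
def MFsub : Submodule F (FA F d) :=
  Submodule.span F {w | ∃ l : List (Ltr d), l ≠ [] ∧ w = wordOf F d l}

/-- The two-sided ideal such that `A_{3,d} = M_F / (idealA ∩ M_F)`: it is generated by
`a³` for `a ∈ M_F` together with `T(a,b,c)` for `a, b, c ∈ M_F`.  (Since all generators lie in
`M_F`, its intersection with `M_F` is exactly the two-sided ideal of the non-unital algebra
`M_F` generated by these elements; in fact it is contained in `M_F`.)
An element `u ∈ M_F` is zero in `A_{3,d}` iff `u ∈ idealA F d`. -/
def idealA : TwoSidedIdeal (FA F d) :=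
  TwoSidedIdeal.span
    ({x | ∃ a ∈ MFsub F d, x = a ^ 3} ∪
     {x | ∃ a ∈ MFsub F d, ∃ b ∈ MFsub F d, ∃ c ∈ MFsub F d, x = Trel F d a b c})

/-
In characteristic 3 every element is the sum of a self-adjoint and a skew one, and a letter may be
replaced by its self-adjoint part at the cost of terms with one more skew factor. So consider
products of one commutator, `n` skew elements and self-adjoint letters, in any order, with at least
`6 - 2 * n` letters occurring three times or more. They vanish by downward induction on `n`:

* For `n ≥ 3`, the relation `T(a, b, c) = 0` implies `y * π = π * star y` for every product `π` of
  three skew elements, with arbitrary factors in between. So `π` annihilates commutators on either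
  side, and a commutator between the skew factors is reduced to this case.
* For `n ≤ 2`, the commutator of two letters is skew and uses up only two letters, so by induction
  letters commute unless they are separated by the commutator or a skew factor. The product is thus
  a function of the commutative contents of at most three gaps (two skew factors are first made
  adjacent, and a letter behind them and the commutator may then be moved to the front, which
  identifies the last gap with the first). Let `X_j x` be the operator placing the letter `x` in the
  gap `j`. Since cubes vanish, `(X_j x - X_0 x) * (X_j y - X_0 y) = 0` for all letters `x`, `y`.
  Modulo the differences `X_j x - X_0 x` every letter that occurs three times contributes
  `(X_0 x) ^ 3 = 0`, and there are more such letters than gaps that differ from the first.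
-/

/-- The rings with involution in which the argument takes place: characteristic 3, the
polarization of `a ^ 3 = 0`, and the relation `T(a, b, c) = 0`, where the skew elements `b`, `c`
play the role of the bars `b̄`, `c̄`. -/
class IsNilThreeStarRing (Q : Type*) [Ring Q] [StarRing Q] : Prop where
  add_add_self (a : Q) : a + a + a = 0
  polarized_cube (a b c : Q) :
    a * b * c + a * c * b + b * a * c + b * c * a + c * a * b + c * b * a = 0
  skew_relation (a : Q) {b c : Q} (hb : b ∈ skewAdjoint Q) (hc : c ∈ skewAdjoint Q) :
    a * b * c + b * star a * c + b * c * a = 0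

namespace IsNilThreeStarRing

section SkewElements

variable {Q : Type*} [Ring Q] [StarRing Q]

theorem mul_add_mul_star_mem_skewAdjoint {b : Q} (hb : b ∈ skewAdjoint Q) (y : Q) :
    y * b + b * star y ∈ skewAdjoint Q := by
  rw [skewAdjoint.mem_iff, star_add, star_mul, star_mul, star_star, skewAdjoint.mem_iff.1 hb]
  noncomm_ring

theorem exists_mul_eq_skew_sub {b : Q} (hb : b ∈ skewAdjoint Q) (y : Q) :
    ∃ c ∈ skewAdjoint Q, y * b = c - b * star y :=
  ⟨_, mul_add_mul_star_mem_skewAdjoint hb y, by abel⟩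

theorem exists_skew_mul_eq_sub {b : Q} (hb : b ∈ skewAdjoint Q) (y : Q) :
    ∃ c ∈ skewAdjoint Q, b * y = c - star y * b :=
  ⟨_, mul_add_mul_star_mem_skewAdjoint hb (star y), by rw [star_star]; abel⟩

theorem star_commutator (v w : Q) : star (v * w - w * v) = star w * star v - star v * star w := by
  rw [star_sub, star_mul, star_mul]

theorem commutator_mem_skewAdjoint_of_selfAdjoint {s t : Q} (hs : s ∈ selfAdjoint Q)
    (ht : t ∈ selfAdjoint Q) : s * t - t * s ∈ skewAdjoint Q := by
  rw [skewAdjoint.mem_iff, star_commutator, selfAdjoint.mem_iff.1 hs, selfAdjoint.mem_iff.1 ht,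
    neg_sub]

theorem commutator_mem_skewAdjoint_of_skewAdjoint {p q : Q} (hp : p ∈ skewAdjoint Q)
    (hq : q ∈ skewAdjoint Q) : p * q - q * p ∈ skewAdjoint Q := by
  rw [skewAdjoint.mem_iff, star_commutator, skewAdjoint.mem_iff.1 hp, skewAdjoint.mem_iff.1 hq]
  noncomm_ring

theorem forall_star_mem_skewAdjoint {bs : List Q} (h_skew : ∀ b ∈ bs, b ∈ skewAdjoint Q) :
    ∀ b ∈ bs.map star, b ∈ skewAdjoint Q := by
  intro b' hb'
  obtain ⟨b, hb, rfl⟩ := List.mem_map.1 hb'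
  rw [skewAdjoint.mem_iff.1 (h_skew b hb)]
  exact neg_mem (h_skew b hb)

variable [IsNilThreeStarRing Q]

-- In characteristic 3 one half is `-1`.
theorem exists_eq_selfAdjoint_add_skewAdjoint (v : Q) :
    ∃ s ∈ selfAdjoint Q, ∃ p ∈ skewAdjoint Q, v = s + p := by
  refine ⟨-(v + star v), ?_, -(v - star v), ?_, ?_⟩
  · rw [selfAdjoint.mem_iff, star_neg, star_add, star_star, add_comm]
  · rw [skewAdjoint.mem_iff, star_neg, star_sub, star_star, neg_sub, neg_neg]
  · linear_combination (norm := noncomm_ring) add_add_self v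

variable {b c e : Q}

theorem mul_skew_triple (hb : b ∈ skewAdjoint Q) (hc : c ∈ skewAdjoint Q)
    (he : e ∈ skewAdjoint Q) (w : Q) : w * b * c * e = b * c * e * star w := by
  have h₁ := skew_relation (star w) hc he
  have h₂ := skew_relation w hb hc
  rw [star_star] at h₁
  linear_combination (norm := noncomm_ring) h₂ * e - b * h₁

theorem skew_triple_mul_comm (hb : b ∈ skewAdjoint Q) (hc : c ∈ skewAdjoint Q)
    (he : e ∈ skewAdjoint Q) (v w : Q) : b * c * e * v * w = b * c * e * w * v := by
  have hv := mul_skew_triple hb hc he (star v)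
  have hw := mul_skew_triple hb hc he (star w)
  have hvw := mul_skew_triple hb hc he (star v * star w)
  simp only [star_mul, star_star] at hv hw hvw
  linear_combination (norm := noncomm_ring) hvw - star v * hw - hv * w

theorem mul_gapped_skew_triple (hb : b ∈ skewAdjoint Q) (hc : c ∈ skewAdjoint Q)
    (he : e ∈ skewAdjoint Q) (y u v : Q) :
    y * (b * u * c * v * e) = b * u * c * v * e * star y := by
  obtain ⟨c', hc', h_uc⟩ := exists_mul_eq_skew_sub hc u
  obtain ⟨e', he', h_ve⟩ := exists_mul_eq_skew_sub he v
  obtain ⟨e'', he'', h_uve⟩ := exists_mul_eq_skew_sub he (star u * v)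
  have gaps_moved_right : b * u * c * v * e =
      b * c' * e' - b * c' * e * star v - b * c * e'' + b * c * e * star (star u * v) := by
    linear_combination (norm := noncomm_ring) b * h_uc * v * e + b * c' * h_ve - b * c * h_uve
  rw [gaps_moved_right]
  linear_combination (norm := noncomm_ring) mul_skew_triple hb hc' he' y
    - mul_skew_triple hb hc' he y * star v - mul_skew_triple hb hc he'' y
    + mul_skew_triple hb hc he y * star (star u * v)
    - skew_triple_mul_comm hb hc' he (star y) (star v)
    + skew_triple_mul_comm hb hc he (star y) (star (star u * v))

theorem gapped_skew_triple_mul_commutator (hb : b ∈ skewAdjoint Q) (hc : c ∈ skewAdjoint Q)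
    (he : e ∈ skewAdjoint Q) (u v z x y : Q) :
    b * u * c * v * e * z * (x * y - y * x) = 0 := by
  have hx := mul_gapped_skew_triple hb hc he (star x) u v
  have hy := mul_gapped_skew_triple hb hc he (star y) u v
  have hxy := mul_gapped_skew_triple hb hc he (star x * star y) u v
  have hz := mul_gapped_skew_triple hb hc he (star z) u v
  simp only [star_mul, star_star] at hx hy hxy hz
  have without_gap : b * u * c * v * e * (x * y - y * x) = 0 := by
    linear_combination (norm := noncomm_ring) hxy - hx * y - star x * hy
  rw [← hz, mul_assoc, without_gap, mul_zero]

theorem commutator_mul_gapped_skew_triple (hb : b ∈ skewAdjoint Q) (hc : c ∈ skewAdjoint Q)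
    (he : e ∈ skewAdjoint Q) (u v z x y : Q) :
    (x * y - y * x) * z * (b * u * c * v * e) = 0 := by
  rw [mul_gapped_skew_triple hb hc he, star_mul, star_commutator, ← mul_assoc]
  exact gapped_skew_triple_mul_commutator hb hc he u v (star z) (star y) (star x)

theorem skew_triple_reverse (hb : b ∈ skewAdjoint Q) (hc : c ∈ skewAdjoint Q)
    (he : e ∈ skewAdjoint Q) : b * c * e = -(e * c * b) := by
  have h₁ := skew_relation e hb hc
  have h₂ := skew_relation b he hc
  rw [skewAdjoint.mem_iff.1 he] at h₁
  rw [skewAdjoint.mem_iff.1 hb] at h₂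
  linear_combination (norm := noncomm_ring) h₁ + h₂

theorem skew_mul_skew_commutator_mul_skew_mul_skew {v w : Q} (hb : b ∈ skewAdjoint Q)
    (hvw : v * w - w * v ∈ skewAdjoint Q) (hc : c ∈ skewAdjoint Q) (he : e ∈ skewAdjoint Q) :
    b * (v * w - w * v) * c * e = 0 := by
  have h_rel := skew_relation (v * w - w * v) hc he
  rw [skewAdjoint.mem_iff.1 hvw] at h_rel
  have h_right : b * c * e * (v * w - w * v) = 0 := by
    simpa using gapped_skew_triple_mul_commutator hb hc he 1 1 1 v w
  have h_left : (v * w - w * v) * c * b * e = 0 := by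
    simpa [mul_assoc] using commutator_mul_gapped_skew_triple hc hb he 1 1 1 v w
  have h_reverse := skew_triple_reverse hb hc hvw
  linear_combination (norm := noncomm_ring) b * h_rel - h_right + h_reverse * e - h_left

theorem skew_mul_mixed_commutator_mul_skew_mul_skew {p s : Q} (hb : b ∈ skewAdjoint Q)
    (hp : p ∈ skewAdjoint Q) (hs : s ∈ selfAdjoint Q) (hc : c ∈ skewAdjoint Q)
    (he : e ∈ skewAdjoint Q) : b * (p * s - s * p) * c * e = 0 := by
  have hs' := selfAdjoint.mem_iff.1 hs
  have h_pc := skew_relation s hp hc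
  have h_pb := skew_relation s hp hb
  have h_bpc := mul_skew_triple hb hp hc s
  have h_pbe := mul_skew_triple hp hb he s
  have h_pce := mul_skew_triple hp hc he s
  have hbs := mul_add_mul_star_mem_skewAdjoint hb s
  rw [hs'] at h_pc h_pb h_bpc h_pbe h_pce hbs
  have h_reverse := skew_triple_reverse hb hp hc
  have h_reverse' := skew_triple_reverse hbs hp hc
  have h_swap : b * s * p * c * e = -(c * p * s * b * e) := by
    linear_combination (norm := noncomm_ring) h_reverse' * e - h_bpc * e - h_reverse * s * e
  linear_combination (norm := noncomm_ring) b * h_pc * e + c * h_pb * e - h_swap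
    - h_reverse * s * e - b * h_pce - c * h_pbe - h_reverse * e * s

theorem skew_mul_commutator_mul_skew_mul_skew (hb : b ∈ skewAdjoint Q) (hc : c ∈ skewAdjoint Q)
    (he : e ∈ skewAdjoint Q) (v w : Q) : b * (v * w - w * v) * c * e = 0 := by
  obtain ⟨s, hs, p, hp, rfl⟩ := exists_eq_selfAdjoint_add_skewAdjoint v
  obtain ⟨t, ht, q, hq, rfl⟩ := exists_eq_selfAdjoint_add_skewAdjoint w
  have h_st := skew_mul_skew_commutator_mul_skew_mul_skew hb
    (commutator_mem_skewAdjoint_of_selfAdjoint hs ht) hc he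
  have h_pq := skew_mul_skew_commutator_mul_skew_mul_skew hb
    (commutator_mem_skewAdjoint_of_skewAdjoint hp hq) hc he
  have h_pt := skew_mul_mixed_commutator_mul_skew_mul_skew hb hp ht hc he
  have h_qs := skew_mul_mixed_commutator_mul_skew_mul_skew hb hq hs hc he
  linear_combination (norm := noncomm_ring) h_st + h_pq + h_pt - h_qs

theorem gapped_skew_commutator_skew_skew (hb : b ∈ skewAdjoint Q) (hc : c ∈ skewAdjoint Q)
    (he : e ∈ skewAdjoint Q) (v w x y z : Q) :
    b * x * (v * w - w * v) * y * c * z * e = 0 := by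
  have h_z {b c e : Q} (hb : b ∈ skewAdjoint Q) (hc : c ∈ skewAdjoint Q)
      (he : e ∈ skewAdjoint Q) (z : Q) : b * (v * w - w * v) * c * z * e = 0 := by
    obtain ⟨e', he', h_ze⟩ := exists_mul_eq_skew_sub he z
    linear_combination (norm := noncomm_ring) b * (v * w - w * v) * c * h_ze
      + skew_mul_commutator_mul_skew_mul_skew hb hc he' v w
      - skew_mul_commutator_mul_skew_mul_skew hb hc he v w * star z
  have h_yz {b c e : Q} (hb : b ∈ skewAdjoint Q) (hc : c ∈ skewAdjoint Q)
      (he : e ∈ skewAdjoint Q) (y z : Q) : b * (v * w - w * v) * y * c * z * e = 0 := by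
    obtain ⟨c', hc', h_yc⟩ := exists_mul_eq_skew_sub hc y
    linear_combination (norm := noncomm_ring) b * (v * w - w * v) * h_yc * z * e
      + h_z hb hc' he z - h_z hb hc he (star y * z)
  obtain ⟨b', hb', h_bx⟩ := exists_skew_mul_eq_sub hb x
  linear_combination (norm := noncomm_ring) h_bx * (v * w - w * v) * y * c * z * e
    + h_yz hb' hc he y z - star x * h_yz hb hc he y z

theorem gapped_skew_skew_commutator_skew (hb : b ∈ skewAdjoint Q) (hc : c ∈ skewAdjoint Q)
    (he : e ∈ skewAdjoint Q) (v w x y z : Q) :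
    b * x * c * y * (v * w - w * v) * z * e = 0 := by
  have h := congrArg star
    (gapped_skew_commutator_skew_skew he hc hb (star w) (star v) (star z) (star y) (star x))
  simp only [star_mul, star_commutator, skewAdjoint.mem_iff.1 hb, skewAdjoint.mem_iff.1 hc,
    skewAdjoint.mem_iff.1 he, star_star, star_zero] at h
  linear_combination (norm := noncomm_ring) -h

theorem mul_commutator_skew_skew (hb : b ∈ skewAdjoint Q) (hc : c ∈ skewAdjoint Q)
    (v w y u x : Q) :
    y * ((v * w - w * v) * u * b * x * c) = (v * w - w * v) * u * b * x * c * star y := by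
  obtain ⟨s, hs, p, hp, rfl⟩ := exists_eq_selfAdjoint_add_skewAdjoint v
  obtain ⟨t, ht, q, hq, rfl⟩ := exists_eq_selfAdjoint_add_skewAdjoint w
  have h_mixed {p s : Q} (hp : p ∈ skewAdjoint Q) (hs : s ∈ selfAdjoint Q) :
      y * ((p * s - s * p) * u * b * x * c) = (p * s - s * p) * u * b * x * c * star y := by
    have h₁ := mul_gapped_skew_triple hp hb hc y (s * u) x
    have h₂ := mul_gapped_skew_triple hp hb hc (y * s) u x
    have h₃ := mul_gapped_skew_triple hp hb hc s u x
    rw [star_mul, selfAdjoint.mem_iff.1 hs] at h₂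
    rw [selfAdjoint.mem_iff.1 hs] at h₃
    linear_combination (norm := noncomm_ring) h₁ - h₂ + h₃ * star y
  have h_st := mul_gapped_skew_triple (commutator_mem_skewAdjoint_of_selfAdjoint hs ht) hb hc y u x
  have h_pq := mul_gapped_skew_triple (commutator_mem_skewAdjoint_of_skewAdjoint hp hq) hb hc y u x
  linear_combination (norm := noncomm_ring) h_st + h_pq + h_mixed hp ht - h_mixed hq hs

end SkewElements

end IsNilThreeStarRing

section Pigeonhole

variable {R ι J : Type*} [CommRing R]

theorem prod_sum_mul_eq_zero_of_card_lt (D : J → ι → R) (c : ι → J → R) {K : Finset J}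
    {T : Finset ι} (h_card : K.card < T.card)
    (h_mul : ∀ j ∈ K, ∀ x ∈ T, ∀ y ∈ T, D j x * D j y = 0) :
    ∏ x ∈ T, ∑ j ∈ K, c x j * D j x = 0 := by
  classical
  rw [Finset.prod_sum]
  refine Finset.sum_eq_zero fun p hp => ?_
  obtain ⟨x, -, y, -, hxy, h_eq⟩ : ∃ x ∈ T.attach, ∃ y ∈ T.attach, x ≠ y ∧
      p x.1 x.2 = p y.1 y.2 :=
    Finset.exists_ne_map_eq_of_card_lt_of_maps_to (by rwa [Finset.card_attach])
      fun x _ => Finset.mem_pi.1 hp x.1 x.2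
  have h_zero : D (p x.1 x.2) x * D (p y.1 y.2) y = 0 := by
    rw [h_eq, h_mul _ (Finset.mem_pi.1 hp y.1 y.2) _ x.2 _ y.2]
  rw [Finset.prod_mul_distrib, ← Finset.mul_prod_erase _ (fun z : T => D (p z.1 z.2) z)
    (Finset.mem_attach T x), ← Finset.mul_prod_erase _ (fun z : T => D (p z.1 z.2) z)
    (Finset.mem_erase.2 ⟨hxy.symm, Finset.mem_attach T y⟩), ← mul_assoc (D _ _), h_zero, zero_mul,
    mul_zero]

theorem prod_pow_count_dvd_prod_map [DecidableEq ι] (X : ι → R) (T : Finset ι) (g : Multiset ι) :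
    ∏ x ∈ T, X x ^ g.count x ∣ (g.map X).prod := by
  rw [Finset.prod_multiset_map_count,
    ← Finset.prod_subset (Finset.inter_subset_left (s₂ := g.toFinset))]
  · exact Finset.prod_dvd_prod_of_subset _ _ _ Finset.inter_subset_right
  · intro x hxT hx
    have h_notMem : x ∉ g := fun hxg => hx (Finset.mem_inter.2 ⟨hxT, Multiset.mem_toFinset.2 hxg⟩)
    rw [Multiset.count_eq_zero_of_notMem h_notMem, pow_zero]

variable [Fintype J]

theorem exists_prod_pow_eq_sum_mul_sub (X : J → R) (j₀ : J) {K : Finset J}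
    (h_same : ∀ j ∉ K, X j = X j₀) {m : ℕ} (h_pow : X j₀ ^ m = 0) (n : J → ℕ)
    (hn : m ≤ ∑ j, n j) : ∃ c : J → R, ∏ j, X j ^ n j = ∑ j ∈ K, c j * (X j - X j₀) := by
  let I : Ideal R := Ideal.span ((fun j => X j - X j₀) '' K)
  have h_mod (j : J) : Ideal.Quotient.mk I (X j) = Ideal.Quotient.mk I (X j₀) := by
    by_cases hj : j ∈ K
    · exact Ideal.Quotient.eq.2 (Ideal.subset_span (Set.mem_image_of_mem _ hj))
    · rw [h_same j hj]
  have h_mem : ∏ j, X j ^ n j ∈ I := by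
    rw [← Ideal.Quotient.eq_zero_iff_mem, map_prod]
    simp only [map_pow, h_mod]
    rw [Finset.prod_pow_eq_pow_sum, ← map_pow, pow_eq_zero_of_le hn h_pow, map_zero]
  obtain ⟨c, hc⟩ := (Submodule.mem_span_image_finset_iff_exists_fun' R).1 h_mem
  exact ⟨c, hc.symm⟩

-- Each letter of `T` contributes a combination of the differences `X j x - X j₀ x` with `j ∈ K`,
-- and two of the letters have to use the same `j`.
theorem prod_prod_map_eq_zero_of_card_lt [DecidableEq ι] (X : J → ι → R) (j₀ : J) {K : Finset J}
    {T : Finset ι} (h_card : K.card < T.card) (h_same : ∀ j ∉ K, ∀ x ∈ T, X j x = X j₀ x)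
    (h_mul : ∀ j ∈ K, ∀ x ∈ T, ∀ y ∈ T, (X j x - X j₀ x) * (X j y - X j₀ y) = 0) {m : ℕ}
    (h_pow : ∀ x ∈ T, X j₀ x ^ m = 0) (g : J → Multiset ι)
    (h_count : ∀ x ∈ T, m ≤ ∑ j, (g j).count x) :
    ∏ j, ((g j).map (X j)).prod = 0 := by
  have h_letter : ∀ x ∈ T, ∃ c : J → R,
      ∏ j, X j x ^ (g j).count x = ∑ j ∈ K, c j * (X j x - X j₀ x) := fun x hx =>
    exists_prod_pow_eq_sum_mul_sub (X · x) j₀ (fun j hj => h_same j hj x hx) (h_pow x hx) _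
      (h_count x hx)
  choose! c hc using h_letter
  refine zero_dvd_iff.1 ?_
  calc (0 : R) = ∏ x ∈ T, ∑ j ∈ K, c x j * (X j x - X j₀ x) :=
        (prod_sum_mul_eq_zero_of_card_lt (fun j x => X j x - X j₀ x) c h_card h_mul).symm
    _ = ∏ x ∈ T, ∏ j, X j x ^ (g j).count x := Finset.prod_congr rfl fun x hx => (hc x hx).symm
    _ = ∏ j, ∏ x ∈ T, X j x ^ (g j).count x := Finset.prod_comm
    _ ∣ ∏ j, ((g j).map (X j)).prod :=
        Finset.prod_dvd_prod_of_dvd _ _ fun j _ => prod_pow_count_dvd_prod_map (X j) T (g j)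

end Pigeonhole

section TranslationIdeal

variable {G A : Type*} [AddCommMonoid G] [AddCommGroup A]

/-- The action of the monoid algebra of `G` on functions on `G` by translation:
`single g 1` sends `f` to `h ↦ f (h + g)`. -/
noncomputable def translation (G A : Type*) [AddCommMonoid G] [AddCommGroup A] :
    AddMonoidAlgebra ℤ G →ₐ[ℤ] Module.End ℤ (G → A) :=
  AddMonoidAlgebra.lift ℤ (Module.End ℤ (G → A)) G
    { toFun := fun g => LinearMap.funLeft ℤ A fun h => h + g.toAdd
      map_one' := by ext; simp [LinearMap.funLeft]
      map_mul' := fun g g' => by ext f h; simp [LinearMap.funLeft, add_assoc] }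

theorem translation_single (g h : G) (f : G → A) :
    translation G A (AddMonoidAlgebra.single g 1) f h = f (h + g) := by
  simp [translation, LinearMap.funLeft]

/-- The annihilator of a function `f` on `G` for the translation action.  The quotient by it is a
commutative ring in which the relations satisfied by all translates of `f` hold. -/
noncomputable def translationAnnihilator (f : G → A) : Ideal (AddMonoidAlgebra ℤ G) where
  carrier := {p | translation G A p f = 0}
  zero_mem' := by simp
  add_mem' {p q} (hp : translation G A p f = 0) (hq : translation G A q f = 0) :=
    show translation G A (p + q) f = 0 by rw [map_add, LinearMap.add_apply, hp, hq, add_zero]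
  smul_mem' c p (hp : translation G A p f = 0) :=
    show translation G A (c * p) f = 0 by rw [map_mul, Module.End.mul_apply, hp, map_zero]

theorem mem_translationAnnihilator {f : G → A} {p : AddMonoidAlgebra ℤ G} :
    p ∈ translationAnnihilator f ↔ ∀ h, translation G A p f h = 0 :=
  funext_iff

/-- The class of the monomial `g` in the quotient of the monoid algebra by the annihilator
of `f`. -/
noncomputable def monomialClass (f : G → A) :
    Multiplicative G →* AddMonoidAlgebra ℤ G ⧸ translationAnnihilator f :=
  (Ideal.Quotient.mk (translationAnnihilator f) : _ →* _).comp (AddMonoidAlgebra.of ℤ G)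

theorem apply_eq_zero_of_monomialClass_eq_zero {f : G → A} {g : G}
    (hg : monomialClass f (.ofAdd g) = 0) : f g = 0 := by
  have h := mem_translationAnnihilator.1 (Ideal.Quotient.eq_zero_iff_mem.1 hg) 0
  simpa [translation_single] using h

end TranslationIdeal

section GapFunctions

variable {J : Type*} [Fintype J] [DecidableEq J]

theorem sum_add_single_add_single {M : Type*} [AddCommMonoid M] (i k : J)
    (h : J → M) (u v : M) :
    ∑ j, (h + (Pi.single i u + Pi.single k v) : J → M) j = ∑ j, h j + (u + v) := by
  simp only [Pi.add_apply, Finset.sum_add_distrib, Fintype.sum_pi_single']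

variable {ι A : Type*} [AddCommGroup A]

theorem monomialClass_eq_prod (f : (J → Multiset ι) → A) (g : J → Multiset ι) :
    monomialClass f (.ofAdd g) =
      ∏ j, ((g j).map fun x => monomialClass f (.ofAdd (Pi.single j {x}))).prod := by
  have h_gap (j : J) (c : Multiset ι) : monomialClass f (.ofAdd (Pi.single j c)) =
      (c.map fun x => monomialClass f (.ofAdd (Pi.single j {x}))).prod := by
    induction c using Multiset.induction_on with
    | empty => simp
    | cons x c ih =>
      rw [← Multiset.singleton_add, Pi.single_add, ofAdd_add, map_mul, ih, Multiset.singleton_add,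
        Multiset.map_cons, Multiset.prod_cons]
  simp only [← h_gap, ← map_prod, ← ofAdd_sum, Finset.univ_sum_single]

-- In the quotient by the annihilator of `f`, write `X j x` for the class of the letter `x` placed
-- in the gap `j`.
theorem eq_zero_of_translate_relations [DecidableEq ι] (f : (J → Multiset ι) → A) (j₀ : J)
    {K : Finset J} {T : Finset ι} (h_card : K.card < T.card)
    (h_same : ∀ j ∉ K, ∀ x ∈ T, ∀ h : J → Multiset ι,
      f (h + Pi.single j {x}) = f (h + Pi.single j₀ {x}))
    (h_mul : ∀ j ∈ K, ∀ x ∈ T, ∀ y ∈ T, ∀ h : J → Multiset ι,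
      f (h + (Pi.single j {x} + Pi.single j {y})) - f (h + (Pi.single j {x} + Pi.single j₀ {y}))
      - f (h + (Pi.single j₀ {x} + Pi.single j {y}))
      + f (h + (Pi.single j₀ {x} + Pi.single j₀ {y})) = 0)
    {m : ℕ} (h_pow : ∀ x ∈ T, ∀ h : J → Multiset ι, f (h + m • Pi.single j₀ {x}) = 0)
    (g : J → Multiset ι) (h_count : ∀ x ∈ T, m ≤ ∑ j, (g j).count x) : f g = 0 := by
  let X (j : J) (x : ι) := monomialClass f (.ofAdd (Pi.single j {x}))
  refine apply_eq_zero_of_monomialClass_eq_zero ?_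
  rw [monomialClass_eq_prod]
  refine prod_prod_map_eq_zero_of_card_lt X j₀ h_card ?_ ?_ ?_ g h_count
  · intro j hj x hx
    refine Ideal.Quotient.eq.2 (mem_translationAnnihilator.2 fun h => ?_)
    simp [translation_single, h_same j hj x hx]
  · intro j hj x hx y hy
    rw [sub_mul, mul_sub, mul_sub, ← sub_add]
    simp only [X, ← map_mul, ← ofAdd_add]
    refine Ideal.Quotient.eq_zero_iff_mem.2 (mem_translationAnnihilator.2 fun h => ?_)
    simpa [translation_single] using h_mul j hj x hx y hy h
  · intro x hx
    rw [← map_pow, ← ofAdd_nsmul]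
    refine Ideal.Quotient.eq_zero_iff_mem.2 (mem_translationAnnihilator.2 fun h => ?_)
    simpa [translation_single] using h_pow x hx h

end GapFunctions

namespace IsNilThreeStarRing

section GappedProducts

variable {ι Q : Type*} [Ring Q]

/-- The product of two fixed factors `A`, `B` with words `l 0`, `l 1`, `l 2` in the letters `s x`
before, between and after them. -/
def gappedProd (s : ι → Q) (A B : Q) (l : Fin 3 → List ι) : Q :=
  ((l 0).map s).prod * A * ((l 1).map s).prod * B * ((l 2).map s).prod

theorem gappedProd_commutator_update_cons [StarRing Q] [IsNilThreeStarRing Q] {s : ι → Q}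
    {v w b c : Q} (hb : b ∈ skewAdjoint Q) (hc : c ∈ skewAdjoint Q) {x : ι}
    (hx : s x ∈ selfAdjoint Q) (l : Fin 3 → List ι) :
    gappedProd s (v * w - w * v) (b * c) (Function.update l 2 (x :: l 2)) =
      gappedProd s (v * w - w * v) (b * c) (Function.update l 0 (x :: l 0)) := by
  have h_star (y : Q) := mul_commutator_skew_skew hb hc v w y ((l 1).map s).prod 1
  have h_mul := h_star (s x * ((l 0).map s).prod)
  rw [star_mul, selfAdjoint.mem_iff.1 hx] at h_mul
  simp only [gappedProd, Function.update_self, ne_eq, Fin.reduceEq, not_false_eq_true,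
    Function.update_of_ne, List.map_cons, List.prod_cons]
  linear_combination (norm := noncomm_ring)
    (h_star ((l 0).map s).prod * s x - h_mul) * ((l 2).map s).prod

/-- A gapped product as a function of the contents of its gaps.  It is set to zero unless the total
content is `N`, as letters may be permuted within a gap only for a given total content. -/
noncomputable def gapFunction [DecidableEq ι] (s : ι → Q) (A B : Q) (N : Multiset ι)
    (g : Fin 3 → Multiset ι) : Q :=
  if ∑ j, g j = N then gappedProd s A B fun j => (g j).toList else 0

variable [DecidableEq ι] {s : ι → Q} {A B : Q} {N : Multiset ι}

theorem gapFunction_of_sum_ne {g : Fin 3 → Multiset ι} (h_sum : ∑ j, g j ≠ N) :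
    gapFunction s A B N g = 0 :=
  if_neg h_sum

variable (h_perm : ∀ l l' : Fin 3 → List ι, (∀ j, (l j).Perm (l' j)) →
  ∑ j, (l j : Multiset ι) = N → gappedProd s A B l = gappedProd s A B l')

include h_perm

theorem gapFunction_eq_gappedProd {g : Fin 3 → Multiset ι} (h_sum : ∑ j, g j = N)
    (l : Fin 3 → List ι) (hl : ∀ j, (l j : Multiset ι) = g j) :
    gapFunction s A B N g = gappedProd s A B l := by
  rw [gapFunction, if_pos h_sum]
  refine h_perm _ _ (fun j => ?_) ?_
  · rw [← Multiset.coe_eq_coe, Multiset.coe_toList, hl]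
  · simp only [Multiset.coe_toList, h_sum]

theorem exists_gapFunction_add_eq {j : Fin 3} (hj : j ≠ 0) (h : Fin 3 → Multiset ι) :
    ∃ P E S : Q, ∀ u v : List ι, ∑ i, h i + (↑u + ↑v) = N →
      gapFunction s A B N (h + (Pi.single 0 ↑u + Pi.single j ↑v)) =
        P * (u.map s).prod * E * (v.map s).prod * S := by
  let H (i : Fin 3) : Q := ((h i).toList.map s).prod
  obtain rfl | rfl : j = 1 ∨ j = 2 := by lia
  · refine ⟨H 0, A, H 1 * B * H 2, fun u v h_sum => ?_⟩
    rw [gapFunction_eq_gappedProd h_perm ((sum_add_single_add_single _ _ _ _ _).trans h_sum)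
      ![(h 0).toList ++ u, v ++ (h 1).toList, (h 2).toList]]
    · simp [gappedProd, H, mul_assoc]
    · intro i
      fin_cases i <;> simp [← Multiset.coe_add, add_comm]
  · refine ⟨H 0, A * H 1 * B, H 2, fun u v h_sum => ?_⟩
    rw [gapFunction_eq_gappedProd h_perm ((sum_add_single_add_single _ _ _ _ _).trans h_sum)
      ![(h 0).toList ++ u, (h 1).toList, v ++ (h 2).toList]]
    · simp [gappedProd, H, mul_assoc]
    · intro i
      fin_cases i <;> simp [← Multiset.coe_add, add_comm]

theorem gapFunction_add_three_nsmul {x : ι} (h_cube : s x ^ 3 = 0) (h : Fin 3 → Multiset ι) :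
    gapFunction s A B N (h + 3 • Pi.single 0 {x}) = 0 := by
  have h_single : (3 • Pi.single 0 {x} : Fin 3 → Multiset ι) =
      Pi.single 0 ↑[x, x, x] + Pi.single 1 ↑([] : List ι) := by
    rw [← Pi.single_smul, Multiset.nsmul_singleton, Multiset.coe_nil, Pi.single_zero, add_zero]
    rfl
  rw [h_single]
  by_cases h_sum : ∑ i, h i + (↑[x, x, x] + ↑([] : List ι)) = N
  · obtain ⟨P, E, S, h_fac⟩ := exists_gapFunction_add_eq h_perm (j := 1) (by decide) h
    rw [h_fac _ _ h_sum]
    simp [← pow_three, h_cube]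
  · exact gapFunction_of_sum_ne ((sum_add_single_add_single _ _ _ _ _).trans_ne h_sum)

theorem exists_gapFunction_add_pair_eq {j : Fin 3} (hj : j ≠ 0) (h : Fin 3 → Multiset ι) :
    ∃ P E S : Q, ∀ x y : ι, ∑ i, h i + ({x} + {y}) = N →
      gapFunction s A B N (h + (Pi.single j {x} + Pi.single j {y})) = P * E * s x * s y * S ∧
      gapFunction s A B N (h + (Pi.single 0 {x} + Pi.single j {y})) = P * s x * E * s y * S ∧
      gapFunction s A B N (h + (Pi.single 0 {x} + Pi.single 0 {y})) = P * s x * s y * E * S := by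
  obtain ⟨P, E, S, h_fac⟩ := exists_gapFunction_add_eq h_perm hj h
  refine ⟨P, E, S, fun x y h_sum => ⟨?_, ?_, ?_⟩⟩
  · have h_pair := h_fac [] [x, y] h_sum
    rw [Multiset.coe_nil, Pi.single_zero, zero_add] at h_pair
    rw [← Pi.single_add]
    exact h_pair.trans (by simp [mul_assoc])
  · simpa using h_fac [x] [y] h_sum
  · have h_pair := h_fac [x, y] [] h_sum
    rw [Multiset.coe_nil, Pi.single_zero, add_zero] at h_pair
    rw [← Pi.single_add]
    exact h_pair.trans (by simp [mul_assoc])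

theorem gapFunction_add_single_eq_of_gappedProd_eq {j : Fin 3} {x : ι}
    (h_move : ∀ l : Fin 3 → List ι,
      gappedProd s A B (Function.update l j (x :: l j)) =
        gappedProd s A B (Function.update l 0 (x :: l 0))) (h : Fin 3 → Multiset ι) :
    gapFunction s A B N (h + Pi.single j {x}) = gapFunction s A B N (h + Pi.single 0 {x}) := by
  have h_content (i : Fin 3) :
      ∑ k, (h + Pi.single i {x} : Fin 3 → Multiset ι) k = ∑ k, h k + {x} := by
    simp only [Pi.add_apply, Finset.sum_add_distrib, Fintype.sum_pi_single']
  by_cases h_sum : ∑ k, h k + {x} = N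
  · have h_eq (i : Fin 3) : gapFunction s A B N (h + Pi.single i {x}) = gappedProd s A B
        (Function.update (fun k => (h k).toList) i (x :: (h i).toList)) := by
      refine gapFunction_eq_gappedProd h_perm ((h_content i).trans h_sum) _ fun k => ?_
      obtain rfl | hk := eq_or_ne k i
      · simp [← Multiset.cons_coe, ← Multiset.singleton_add, add_comm]
      · simp [hk]
    rw [h_eq, h_eq, h_move]
  · rw [gapFunction_of_sum_ne ((h_content _).trans_ne h_sum),
      gapFunction_of_sum_ne ((h_content _).trans_ne h_sum)]

variable [StarRing Q] [IsNilThreeStarRing Q]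

-- Within a gap `s x` and `s y` commute, so modulo 3 the second difference is minus the polarized
-- cube of `s x`, `s y` and the factor `E` between the two gaps.
theorem gapFunction_second_difference {j : Fin 3} (hj : j ≠ 0) (x y : ι)
    (h : Fin 3 → Multiset ι) :
    gapFunction s A B N (h + (Pi.single j {x} + Pi.single j {y}))
      - gapFunction s A B N (h + (Pi.single j {x} + Pi.single 0 {y}))
      - gapFunction s A B N (h + (Pi.single 0 {x} + Pi.single j {y}))
      + gapFunction s A B N (h + (Pi.single 0 {x} + Pi.single 0 {y})) = 0 := by
  by_cases h_sum : ∑ n, h n + ({x} + {y}) = N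
  · obtain ⟨P, E, S, h_fac⟩ := exists_gapFunction_add_pair_eq h_perm hj h
    have h_flip (i k : Fin 3) : gapFunction s A B N (h + (Pi.single i {x} + Pi.single k {y})) =
        gapFunction s A B N (h + (Pi.single k {y} + Pi.single i {x})) := by
      rw [add_comm (Pi.single i {x} : Fin 3 → Multiset ι)]
    have h_sum' : ∑ n, h n + ({y} + {x}) = N := by rwa [add_comm ({y} : Multiset ι)]
    obtain ⟨h_jj, h_0j, h_00⟩ := h_fac x y h_sum
    obtain ⟨h_jj', h_0j', h_00'⟩ := h_fac y x h_sum'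
    have h_comm_jj := h_jj.symm.trans ((h_flip j j).trans h_jj')
    have h_comm_00 := h_00.symm.trans ((h_flip 0 0).trans h_00')
    have h_pol := polarized_cube (s x) (s y) E
    have h_char := add_add_self (s x * s y * E + E * s x * s y)
    rw [h_jj, h_flip j 0, h_0j', h_0j, h_00]
    linear_combination (norm := noncomm_ring) P * h_char * S - P * h_pol * S - h_comm_jj
      - h_comm_00
  · have h_zero (i k : Fin 3) := gapFunction_of_sum_ne (s := s) (A := A) (B := B)
      ((sum_add_single_add_single i k h {x} {y}).trans_ne h_sum)
    simp only [h_zero, sub_zero, add_zero]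

theorem gappedProd_eq_zero_of_card_lt {K : Finset (Fin 3)} (hK : 0 ∉ K) {T : Finset ι}
    (h_card : K.card < T.card) (h_cube : ∀ x, s x ^ 3 = 0)
    (h_move : ∀ j ∉ K, ∀ (x : ι) (h : Fin 3 → Multiset ι),
      gapFunction s A B N (h + Pi.single j {x}) = gapFunction s A B N (h + Pi.single 0 {x}))
    (l : Fin 3 → List ι) (hl : ∑ j, (l j : Multiset ι) = N)
    (h_count : ∀ x ∈ T, 3 ≤ N.count x) :
    gappedProd s A B l = 0 := by
  rw [← gapFunction_eq_gappedProd h_perm (g := fun j => l j) hl l fun _ => rfl]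
  refine eq_zero_of_translate_relations (gapFunction s A B N) 0 h_card
    (fun j hj x _ h => h_move j hj x h) (fun j hj x _ y _ h => ?_)
    (fun x _ h => gapFunction_add_three_nsmul h_perm (h_cube x) h) _ fun x hx => ?_
  · exact gapFunction_second_difference h_perm (ne_of_mem_of_not_mem hj hK) x y h
  · rw [← Multiset.count_sum', hl]
    exact h_count x hx

end GappedProducts

end IsNilThreeStarRing

/-- Words with entries of two kinds: letters from `ι` (`Sum.inl`), whose value is fixed by a
valuation, and separators (`Sum.inr`), which are elements of `Q` themselves. -/
abbrev MixedWord (ι Q : Type*) := List (ι ⊕ Q)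

namespace MixedWord

section Basic

variable {ι Q : Type*}

/-- The list of letters of a mixed word. -/
def letters (t : MixedWord ι Q) : List ι := t.filterMap Sum.getLeft?

/-- The list of separators of a mixed word. -/
def separators (t : MixedWord ι Q) : List Q := t.filterMap Sum.getRight?

@[simp] theorem letters_nil : letters ([] : MixedWord ι Q) = [] := rfl

@[simp] theorem letters_inl_cons (x : ι) (t : MixedWord ι Q) :
    letters (.inl x :: t) = x :: letters t := rfl

@[simp] theorem letters_inr_cons (A : Q) (t : MixedWord ι Q) :
    letters (.inr A :: t) = letters t := rfl

@[simp] theorem letters_append (t t' : MixedWord ι Q) :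
    letters (t ++ t') = letters t ++ letters t' :=
  List.filterMap_append

@[simp] theorem letters_map_inl (l : List ι) : letters (l.map .inl : MixedWord ι Q) = l := by
  rw [letters, List.filterMap_map]
  exact List.filterMap_some

@[simp] theorem letters_map_inr (S : List Q) : letters (S.map .inr : MixedWord ι Q) = [] := by
  simp [letters, List.filterMap_map]

@[simp] theorem separators_nil : separators ([] : MixedWord ι Q) = [] := rfl

@[simp] theorem separators_inl_cons (x : ι) (t : MixedWord ι Q) :
    separators (.inl x :: t) = separators t := rfl

@[simp] theorem separators_inr_cons (A : Q) (t : MixedWord ι Q) :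
    separators (.inr A :: t) = A :: separators t := rfl

@[simp] theorem separators_append (t t' : MixedWord ι Q) :
    separators (t ++ t') = separators t ++ separators t' :=
  List.filterMap_append

@[simp] theorem separators_map_inl (l : List ι) :
    separators (l.map .inl : MixedWord ι Q) = [] := by
  simp [separators, List.filterMap_map]

theorem letters_map_sumMap {κ : Type*} (π : κ → ι) (f : Q → Q) (t : MixedWord κ Q) :
    letters (t.map (Sum.map π f)) = (letters t).map π := by
  induction t with
  | nil => rfl
  | cons z t ih => cases z <;> simp [ih]

theorem separators_map_sumMap {κ : Type*} (π : κ → ι) (f : Q → Q) (t : MixedWord κ Q) :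
    separators (t.map (Sum.map π f)) = (separators t).map f := by
  induction t with
  | nil => rfl
  | cons z t ih => cases z <;> simp [ih]

theorem letters_flatten (W : List (MixedWord ι Q)) :
    letters W.flatten = (W.map letters).flatten :=
  List.filterMap_flatten

theorem separators_flatten (W : List (MixedWord ι Q)) :
    separators W.flatten = (W.map separators).flatten :=
  List.filterMap_flatten

theorem letters_perm {t t' : MixedWord ι Q} (h : t.Perm t') : (letters t).Perm (letters t') :=
  h.filterMap _

theorem separators_perm {t t' : MixedWord ι Q} (h : t.Perm t') :
    (separators t).Perm (separators t') :=
  h.filterMap _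

theorem eq_map_inl_of_separators_eq_nil {t : MixedWord ι Q} (h : separators t = []) :
    ∃ l : List ι, t = l.map .inl := by
  induction t with
  | nil => exact ⟨[], rfl⟩
  | cons z t ih =>
    cases z with
    | inl x =>
      obtain ⟨l, rfl⟩ := ih h
      exact ⟨x :: l, rfl⟩
    | inr A => exact absurd h (List.cons_ne_nil A _)

theorem exists_eq_append_of_separators_eq {t : MixedWord ι Q} {S₁ S₂ : List Q} {A : Q}
    (h : separators t = S₁ ++ A :: S₂) :
    ∃ p q, t = p ++ .inr A :: q ∧ separators p = S₁ ∧ separators q = S₂ := by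
  obtain ⟨p, r, rfl, hp, hr⟩ := List.filterMap_eq_append_iff.1 h
  obtain ⟨k, z, q, rfl, hk, hz, hq⟩ := List.filterMap_eq_cons_iff.1 hr
  obtain rfl := Sum.getRight?_eq_some_iff.1 hz
  refine ⟨p ++ k, q, by rw [List.append_assoc], ?_, hq⟩
  have h_k : separators k = [] := List.filterMap_eq_nil_iff.2 hk
  rw [separators_append, h_k, List.append_nil]
  exact hp

theorem exists_eq_append_of_separators_perm {t : MixedWord ι Q} {A : Q} {S : List Q}
    (h : (separators t).Perm (A :: S)) :
    ∃ p r, t = p ++ .inr A :: r ∧ (separators (p ++ r)).Perm S := by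
  obtain ⟨S₁, S₂, h_split⟩ := List.append_of_mem (h.mem_iff.2 List.mem_cons_self)
  obtain ⟨p, r, rfl, rfl, rfl⟩ := exists_eq_append_of_separators_eq h_split
  rw [separators_append, separators_inr_cons] at h
  have h_rest := (List.perm_middle.symm.trans h).cons_inv
  exact ⟨p, r, rfl, by rwa [separators_append]⟩

theorem exists_eq_map_inl_append_of_separators_eq_singleton {t : MixedWord ι Q} {A : Q}
    (h : separators t = [A]) :
    ∃ l l' : List ι, t = l.map .inl ++ .inr A :: l'.map .inl := by
  obtain ⟨p, q, rfl, hp, hq⟩ := exists_eq_append_of_separators_eq (S₁ := []) h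
  obtain ⟨l, rfl⟩ := eq_map_inl_of_separators_eq_nil hp
  obtain ⟨l', rfl⟩ := eq_map_inl_of_separators_eq_nil hq
  exact ⟨l, l', rfl⟩

variable [Ring Q] (s : ι → Q)

/-- The value of a mixed word under the valuation `s` of its letters. -/
def eval (t : MixedWord ι Q) : Q := (t.map (Sum.elim s id)).prod

@[simp] theorem eval_nil : eval s [] = 1 := rfl

@[simp] theorem eval_inl_cons (x : ι) (t : MixedWord ι Q) :
    eval s (.inl x :: t) = s x * eval s t :=
  List.prod_cons

@[simp] theorem eval_inr_cons (A : Q) (t : MixedWord ι Q) :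
    eval s (.inr A :: t) = A * eval s t :=
  List.prod_cons

@[simp] theorem eval_append (t t' : MixedWord ι Q) : eval s (t ++ t') = eval s t * eval s t' := by
  rw [eval, List.map_append, List.prod_append, eval, eval]

@[simp] theorem eval_map_inl (l : List ι) : eval s (l.map .inl) = (l.map s).prod := by
  rw [eval, List.map_map, Sum.elim_comp_inl]

@[simp] theorem eval_map_inr (S : List Q) : eval s (S.map .inr) = S.prod := by
  rw [eval, List.map_map, Sum.elim_comp_inr, List.map_id]

theorem eval_flatten (W : List (MixedWord ι Q)) : eval s W.flatten = (W.map (eval s)).prod := by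
  induction W with
  | nil => rfl
  | cons t W ih => rw [List.flatten_cons, eval_append, ih, List.map_cons, List.prod_cons]

theorem exists_eval_eq_of_separators_eq {t : MixedWord ι Q} {S₁ S₂ : List Q} {A : Q}
    (h : separators t = S₁ ++ A :: S₂) :
    ∃ (y : Q) (q : MixedWord ι Q), eval s t = y * A * eval s q ∧ separators q = S₂ := by
  obtain ⟨p, q, rfl, -, hq⟩ := exists_eq_append_of_separators_eq h
  exact ⟨eval s p, q, by rw [eval_append, eval_inr_cons, mul_assoc], hq⟩

theorem exists_eval_eq_of_separators_eq_cons_cons_cons {t : MixedWord ι Q} {A B C D : Q}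
    {S S' : List Q} (h : separators t = A :: B :: C :: (S ++ D :: S')) :
    ∃ y₀ y₁ y₂ y₃ z : Q, eval s t = y₀ * A * y₁ * B * y₂ * C * y₃ * D * z := by
  obtain ⟨y₀, q₀, h₀, hq₀⟩ := exists_eval_eq_of_separators_eq s (S₁ := []) h
  obtain ⟨y₁, q₁, h₁, hq₁⟩ := exists_eval_eq_of_separators_eq s (S₁ := []) hq₀
  obtain ⟨y₂, q₂, h₂, hq₂⟩ := exists_eval_eq_of_separators_eq s (S₁ := []) hq₁
  obtain ⟨y₃, q₃, h₃, -⟩ := exists_eval_eq_of_separators_eq s hq₂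
  exact ⟨y₀, y₁, y₂, y₃, eval s q₃, by simp only [h₀, h₁, h₂, h₃, mul_assoc]⟩

variable [StarRing Q]

/-- The mixed word read backwards, with the involution applied to its separators. -/
def reflect (t : MixedWord ι Q) : MixedWord ι Q := (t.map (Sum.map id star)).reverse

theorem reflect_append (t t' : MixedWord ι Q) : reflect (t ++ t') = reflect t' ++ reflect t := by
  rw [reflect, List.map_append, List.reverse_append, reflect, reflect]

theorem reflect_map_inr (S : List Q) :
    reflect (S.map .inr : MixedWord ι Q) = (S.map star).reverse.map .inr := by
  rw [reflect, List.map_map, List.map_reverse, List.map_map]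
  rfl

theorem letters_reflect_perm (t : MixedWord ι Q) : (letters (reflect t)).Perm (letters t) := by
  refine (letters_perm (List.reverse_perm _)).trans ?_
  rw [letters_map_sumMap, List.map_id]

theorem separators_reflect (t : MixedWord ι Q) :
    separators (reflect t) = ((separators t).map star).reverse := by
  rw [reflect, separators, List.filterMap_reverse, ← separators, separators_map_sumMap]

variable {s} in
theorem eval_reflect (hs : ∀ x, s x ∈ selfAdjoint Q) (t : MixedWord ι Q) :
    eval s (reflect t) = star (eval s t) := by
  induction t with
  | nil => simp [reflect]
  | cons z t ih =>
    rw [← List.singleton_append, reflect_append, eval_append, eval_append, star_mul, ih]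
    cases z <;> simp [reflect, selfAdjoint.mem_iff.1 (hs _)]

end Basic

open IsNilThreeStarRing

section GappedWords

variable {ι Q : Type*}

/-- The mixed word with separators `A` and `bs`, the latter adjacent to each other, and with the
words `l 0`, `l 1`, `l 2` in the gaps; its value is a gapped product. -/
def gappedWord (A : Q) (bs : List Q) (l : Fin 3 → List ι) : MixedWord ι Q :=
  (l 0).map .inl ++ .inr A :: ((l 1).map .inl ++ bs.map .inr ++ (l 2).map .inl)

theorem coe_letters_gappedWord (A : Q) (bs : List Q) (l : Fin 3 → List ι) :
    (letters (gappedWord A bs l) : Multiset ι) = ∑ j, (l j : Multiset ι) := by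
  simp [gappedWord, Fin.sum_univ_three, ← Multiset.coe_add, add_assoc]

theorem gappedWord_perm {A : Q} {bs : List Q} {l l' : Fin 3 → List ι}
    (h : ∑ j, (l j : Multiset ι) = ∑ j, (l' j : Multiset ι)) :
    (gappedWord A bs l).Perm (gappedWord A bs l') := by
  have h_coe (l : Fin 3 → List ι) : (gappedWord A bs l : Multiset (ι ⊕ Q)) =
      {.inr A} + (bs : Multiset Q).map .inr + (∑ j, (l j : Multiset ι)).map .inl := by
    simp only [gappedWord, Fin.sum_univ_three, Multiset.map_add, Multiset.map_coe,
      ← Multiset.coe_add, ← Multiset.cons_coe, ← Multiset.singleton_add]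
    abel
  rw [← Multiset.coe_eq_coe, h_coe, h_coe, h]

theorem exists_gappedWord_update_eq (A : Q) (bs : List Q) (l : Fin 3 → List ι) (j : Fin 3) :
    ∃ p r : MixedWord ι Q, ∀ k : List ι,
      gappedWord A bs (Function.update l j k) = p ++ k.map .inl ++ r := by
  fin_cases j
  · exact ⟨[], .inr A :: ((l 1).map .inl ++ bs.map .inr ++ (l 2).map .inl), fun k => rfl⟩
  · exact ⟨(l 0).map .inl ++ [.inr A], bs.map .inr ++ (l 2).map .inl,
      fun k => by simp [gappedWord]⟩
  · exact ⟨(l 0).map .inl ++ .inr A :: ((l 1).map .inl ++ bs.map .inr), [],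
      fun k => by simp [gappedWord]⟩

theorem eval_gappedWord [Ring Q] (s : ι → Q) (A : Q) (bs : List Q) (l : Fin 3 → List ι) :
    eval s (gappedWord A bs l) = gappedProd s A bs.prod l := by
  simp [gappedWord, gappedProd, mul_assoc]

end GappedWords

theorem exists_separators_append_reflect_append_eq {ι Q : Type*} [Ring Q] [StarRing Q]
    {p m r : MixedWord ι Q} {v w : Q} (h : separators (p ++ m ++ r) = [v * w - w * v]) :
    ∃ v' w' : Q, separators (p ++ reflect m ++ r) = [v' * w' - w' * v'] := by
  obtain hm | hm : separators m = [] ∨ separators m = [v * w - w * v] := by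
    simp only [separators_append, List.append_eq_singleton_iff, List.append_eq_nil_iff] at h
    tauto
  · exact ⟨v, w, by simpa [separators_reflect, hm] using h⟩
  · exact ⟨star w, star v, by
      simpa [separators_reflect, hm, List.append_eq_cons_iff, star_commutator] using h⟩

section Admissible

variable {ι Q : Type*} [DecidableEq ι] [Ring Q] [StarRing Q]

/-- The mixed words of the theorem: the separators are one commutator and `n` skew elements, in any
order, and at least `6 - 2 * n` letters occur at least three times. -/
def IsAdmissible (t : MixedWord ι Q) (n : ℕ) : Prop :=
  ∃ (v w : Q) (bs : List Q) (T : Finset ι),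
    (separators t).Perm ((v * w - w * v) :: bs) ∧ (∀ b ∈ bs, b ∈ skewAdjoint Q) ∧
      bs.length = n ∧ 6 ≤ 2 * n + T.card ∧ ∀ x ∈ T, 3 ≤ (letters t).count x

theorem IsAdmissible.of_letters_perm {t t' : MixedWord ι Q} {n : ℕ} (h : IsAdmissible t n)
    (h_letters : (letters t').Perm (letters t)) {v w : Q} {bs : List Q}
    (h_sep : (separators t').Perm ((v * w - w * v) :: bs))
    (h_skew : ∀ b ∈ bs, b ∈ skewAdjoint Q) (h_len : bs.length = n) : IsAdmissible t' n := by
  obtain ⟨-, -, -, T, -, -, -, h_card, h_count⟩ := h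
  refine ⟨v, w, bs, T, h_sep, h_skew, h_len, h_card, fun x hx => ?_⟩
  rw [h_letters.count_eq]
  exact h_count x hx

theorem IsAdmissible.perm {t t' : MixedWord ι Q} {n : ℕ} (h : IsAdmissible t n)
    (h_perm : t.Perm t') : IsAdmissible t' n := by
  have ⟨_, _, _, _, h_sep, h_skew, h_len, _⟩ := h
  exact h.of_letters_perm (letters_perm h_perm.symm) ((separators_perm h_perm.symm).trans h_sep)
    h_skew h_len

theorem IsAdmissible.reflect {t : MixedWord ι Q} {n : ℕ} (h : IsAdmissible t n) :
    IsAdmissible (reflect t) n := by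
  have ⟨v, w, bs, _, h_sep, h_skew, h_len, _⟩ := h
  refine h.of_letters_perm (letters_reflect_perm t) (v := star w) (w := star v) ?_
    (forall_star_mem_skewAdjoint h_skew) (by rw [List.length_map, h_len])
  rw [separators_reflect, ← star_commutator]
  exact (List.reverse_perm _).trans (h_sep.map star)

theorem IsAdmissible.replace_letters {l : List ι} {p r : MixedWord ι Q} {n : ℕ}
    (h : IsAdmissible (p ++ l.map .inl ++ r) n) (hl : l.length ≤ 2) {b : Q}
    (hb : b ∈ skewAdjoint Q) : IsAdmissible (p ++ .inr b :: r) (n + 1) := by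
  obtain ⟨v, w, bs, T, h_sep, h_skew, h_len, h_card, h_count⟩ := h
  have h_sdiff : T.card - 2 ≤ (T \ l.toFinset).card :=
    (Nat.sub_le_sub_left (l.toFinset_card_le.trans hl) _).trans (Finset.le_card_sdiff _ _)
  refine ⟨v, w, b :: bs, T \ l.toFinset, ?_, List.forall_mem_cons.2 ⟨hb, h_skew⟩,
    by rw [List.length_cons, h_len], by lia, fun x hx => ?_⟩
  · simp only [separators_append, separators_map_inl, List.append_nil] at h_sep
    rw [separators_append, separators_inr_cons]
    exact List.perm_middle.trans ((h_sep.cons b).trans (.swap _ _ _))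
  · obtain ⟨hxT, hxl⟩ := Finset.mem_sdiff.1 hx
    have h_x := h_count x hxT
    rw [List.mem_toFinset] at hxl
    rw [letters_append, letters_append, letters_map_inl, List.count_append, List.count_append,
      List.count_eq_zero_of_not_mem hxl, add_zero] at h_x
    rwa [letters_append, letters_inr_cons, List.count_append]

variable {s : ι → Q}

theorem eval_append_map_inl_append_of_perm (hs : ∀ x, s x ∈ selfAdjoint Q) {n : ℕ}
    (h_next : ∀ t : MixedWord ι Q, IsAdmissible t (n + 1) → eval s t = 0) {l l' : List ι}
    (hll' : l.Perm l') {p r : MixedWord ι Q} (h : IsAdmissible (p ++ l.map .inl ++ r) n) :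
    eval s (p ++ l.map .inl ++ r) = eval s (p ++ l'.map .inl ++ r) := by
  induction hll' generalizing p with
  | nil => rfl
  | @cons x l l' _ ih =>
    have h_cons (l : List ι) : p ++ (x :: l).map .inl ++ r = p ++ [.inl x] ++ l.map .inl ++ r := by
      simp
    rw [h_cons] at h ⊢
    rw [h_cons, ih h]
  | swap x y l =>
    have h_zero := h_next _ (IsAdmissible.replace_letters (l := [y, x]) (r := l.map .inl ++ r)
      (by simpa using h) le_rfl (commutator_mem_skewAdjoint_of_selfAdjoint (hs y) (hs x)))
    simp only [eval_append, eval_inr_cons, eval_inl_cons, List.map_cons] at h_zero ⊢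
    linear_combination (norm := noncomm_ring) h_zero
  | trans h₁ _ ih₁ ih₂ =>
    exact (ih₁ h).trans (ih₂ (h.perm (((h₁.map _).append_left p).append_right r)))

theorem eval_gappedWord_update_of_perm (hs : ∀ x, s x ∈ selfAdjoint Q) {n : ℕ}
    (h_next : ∀ t : MixedWord ι Q, IsAdmissible t (n + 1) → eval s t = 0) {A : Q} {bs : List Q}
    {l : Fin 3 → List ι} {j : Fin 3} {k : List ι} (hk : (l j).Perm k)
    (h : IsAdmissible (gappedWord A bs l) n) :
    eval s (gappedWord A bs l) = eval s (gappedWord A bs (Function.update l j k)) := by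
  obtain ⟨p, r, h_word⟩ := exists_gappedWord_update_eq A bs l j
  have h_self := h_word (l j)
  rw [Function.update_eq_self] at h_self
  rw [h_self] at h ⊢
  rw [h_word, eval_append_map_inl_append_of_perm hs h_next hk h]

theorem eval_gappedWord_of_perm (hs : ∀ x, s x ∈ selfAdjoint Q) {n : ℕ}
    (h_next : ∀ t : MixedWord ι Q, IsAdmissible t (n + 1) → eval s t = 0) {A : Q} {bs : List Q}
    {l l' : Fin 3 → List ι} (hll' : ∀ j, (l j).Perm (l' j))
    (h : IsAdmissible (gappedWord A bs l) n) :
    eval s (gappedWord A bs l) = eval s (gappedWord A bs l') := by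
  have h_replace (J : Finset (Fin 3)) :
      eval s (gappedWord A bs l) = eval s (gappedWord A bs (J.piecewise l' l)) := by
    induction J using Finset.induction with
    | empty => rw [Finset.piecewise_empty]
    | insert j J hj ih =>
      have h_content : ∑ i, (l i : Multiset ι) = ∑ i, (J.piecewise l' l i : Multiset ι) :=
        Finset.sum_congr rfl fun i _ => by
          rw [Finset.piecewise]
          split_ifs
          exacts [Multiset.coe_eq_coe.2 (hll' i), rfl]
      rw [ih, Finset.piecewise_insert]
      refine eval_gappedWord_update_of_perm hs h_next ?_ (h.perm (gappedWord_perm h_content))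
      rw [Finset.piecewise_eq_of_notMem _ _ _ hj]
      exact hll' j
  simpa using h_replace Finset.univ

variable [IsNilThreeStarRing Q]

theorem eval_eq_zero_of_three_le {t : MixedWord ι Q} {n : ℕ} (h : IsAdmissible t n) (hn : 3 ≤ n) :
    eval s t = 0 := by
  obtain ⟨v, w, bs, -, h_sep, h_skew, rfl, -, -⟩ := h
  obtain ⟨S₁, S₂, h_split⟩ := List.append_of_mem (h_sep.mem_iff.2 List.mem_cons_self)
  have h_bs : (S₁ ++ S₂).Perm bs :=
    List.Perm.cons_inv (List.perm_middle.symm.trans (h_split ▸ h_sep))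
  have h_skew' : ∀ b ∈ S₁ ++ S₂, b ∈ skewAdjoint Q := fun b hb => h_skew b (h_bs.mem_iff.1 hb)
  rw [← h_bs.length_eq] at hn
  match S₁, S₂ with
  | [], b :: c :: e :: S =>
    simp only [List.nil_append, List.forall_mem_cons] at h_skew'
    obtain ⟨hb, hc, he, -⟩ := h_skew'
    obtain ⟨y₀, y₁, y₂, y₃, z, h_eval⟩ :=
      exists_eval_eq_of_separators_eq_cons_cons_cons s (S := []) h_split
    linear_combination (norm := noncomm_ring)
      h_eval + y₀ * commutator_mul_gapped_skew_triple hb hc he y₂ y₃ y₁ v w * z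
  | [b], c :: e :: S =>
    simp only [List.cons_append, List.nil_append, List.forall_mem_cons] at h_skew'
    obtain ⟨hb, hc, he, -⟩ := h_skew'
    obtain ⟨y₀, y₁, y₂, y₃, z, h_eval⟩ :=
      exists_eval_eq_of_separators_eq_cons_cons_cons s (S := []) h_split
    linear_combination (norm := noncomm_ring)
      h_eval + y₀ * gapped_skew_commutator_skew_skew hb hc he v w y₁ y₂ y₃ * z
  | [b, c], e :: S =>
    simp only [List.cons_append, List.nil_append, List.forall_mem_cons] at h_skew'
    obtain ⟨hb, hc, he, -⟩ := h_skew'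
    obtain ⟨y₀, y₁, y₂, y₃, z, h_eval⟩ :=
      exists_eval_eq_of_separators_eq_cons_cons_cons s (S := []) h_split
    linear_combination (norm := noncomm_ring)
      h_eval + y₀ * gapped_skew_skew_commutator_skew hb hc he v w y₁ y₂ y₃ * z
  | b :: c :: e :: S, S₂ =>
    simp only [List.cons_append, List.forall_mem_cons] at h_skew'
    obtain ⟨hb, hc, he, -⟩ := h_skew'
    obtain ⟨y₀, y₁, y₂, y₃, z, h_eval⟩ :=
      exists_eval_eq_of_separators_eq_cons_cons_cons s h_split
    linear_combination (norm := noncomm_ring)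
      h_eval + y₀ * gapped_skew_triple_mul_commutator hb hc he y₁ y₂ y₃ v w * z

theorem eval_gappedWord_eq_zero_of_card_lt (hs : ∀ x, s x ∈ selfAdjoint Q)
    (h_cube : ∀ x, s x ^ 3 = 0) {n : ℕ}
    (h_next : ∀ t : MixedWord ι Q, IsAdmissible t (n + 1) → eval s t = 0)
    {A : Q} {bs : List Q} {K : Finset (Fin 3)} (hK : 0 ∉ K) (h_card : K.card < 6 - 2 * n)
    (h_move : ∀ j ∉ K, j ≠ 0 → ∀ (x : ι) (k : Fin 3 → List ι),
      gappedProd s A bs.prod (Function.update k j (x :: k j)) =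
        gappedProd s A bs.prod (Function.update k 0 (x :: k 0)))
    {l : Fin 3 → List ι} (h : IsAdmissible (gappedWord A bs l) n) :
    eval s (gappedWord A bs l) = 0 := by
  have h_perm (k k' : Fin 3 → List ι) (hkk' : ∀ j, (k j).Perm (k' j))
      (hk : ∑ j, (k j : Multiset ι) = ∑ j, (l j : Multiset ι)) :
      gappedProd s A bs.prod k = gappedProd s A bs.prod k' := by
    rw [← eval_gappedWord, ← eval_gappedWord]
    exact eval_gappedWord_of_perm hs h_next hkk' (h.perm (gappedWord_perm hk.symm))
  obtain ⟨-, -, -, T, -, -, -, h_T, h_count⟩ := h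
  rw [eval_gappedWord]
  refine gappedProd_eq_zero_of_card_lt h_perm hK (T := T) (by lia) h_cube (fun j hj x g => ?_) l rfl
    (by simpa only [← coe_letters_gappedWord A bs, Multiset.coe_count] using h_count)
  obtain rfl | hj₀ := eq_or_ne j 0
  · rfl
  · exact gapFunction_add_single_eq_of_gappedProd_eq h_perm (h_move j hj hj₀ x) g

-- Among the gaps, `K` collects those genuinely different from the first one: two skew elements
-- next to each other let a letter pass from the last gap to the first.
theorem eval_gappedWord_eq_zero (hs : ∀ x, s x ∈ selfAdjoint Q) (h_cube : ∀ x, s x ^ 3 = 0)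
    {v w : Q} {bs : List Q} (h_skew : ∀ b ∈ bs, b ∈ skewAdjoint Q) (h_len : bs.length ≤ 2)
    (h_next : ∀ t : MixedWord ι Q, IsAdmissible t (bs.length + 1) → eval s t = 0)
    {l : Fin 3 → List ι} (h : IsAdmissible (gappedWord (v * w - w * v) bs l) bs.length) :
    eval s (gappedWord (v * w - w * v) bs l) = 0 := by
  obtain h_one | h_two : bs.length ≤ 1 ∨ bs.length = 2 := by lia
  · refine eval_gappedWord_eq_zero_of_card_lt hs h_cube h_next (K := {1, 2}) (by decide)
      (Nat.lt_of_le_of_lt Finset.card_le_two (by lia)) (fun j hj hj₀ => absurd hj ?_) h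
    decide +revert
  · obtain ⟨b, c, rfl⟩ := List.length_eq_two.1 h_two
    obtain ⟨hb, hc, -⟩ := by simpa only [List.forall_mem_cons] using h_skew
    refine eval_gappedWord_eq_zero_of_card_lt hs h_cube h_next (K := {1}) (by decide) (by simp)
      (fun j hj hj₀ x k => ?_) h
    obtain rfl : j = 2 := by decide +revert
    simpa only [List.prod_cons, List.prod_nil, mul_one] using
      gappedProd_commutator_update_cons hb hc (hs x) k

theorem eval_commutator_append_skews_append_eq_zero (hs : ∀ x, s x ∈ selfAdjoint Q)
    (h_cube : ∀ x, s x ^ 3 = 0) {v w : Q} {bs : List Q} (h_skew : ∀ b ∈ bs, b ∈ skewAdjoint Q)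
    (h_len : bs.length ≤ 2)
    (h_next : ∀ t : MixedWord ι Q, IsAdmissible t (bs.length + 1) → eval s t = 0)
    {p r : MixedWord ι Q} (hp : separators p = [v * w - w * v]) (hr : separators r = [])
    (h : IsAdmissible (p ++ bs.map .inr ++ r) bs.length) :
    eval s (p ++ bs.map .inr ++ r) = 0 := by
  obtain ⟨l₀, l₁, rfl⟩ := exists_eq_map_inl_append_of_separators_eq_singleton hp
  obtain ⟨l₂, rfl⟩ := eq_map_inl_of_separators_eq_nil hr
  have h_word : l₀.map .inl ++ .inr (v * w - w * v) :: l₁.map .inl ++ bs.map .inr ++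
      l₂.map .inl = gappedWord (v * w - w * v) bs ![l₀, l₁, l₂] := by
    simp [gappedWord]
  rw [h_word] at h ⊢
  exact eval_gappedWord_eq_zero hs h_cube h_skew h_len h_next h

theorem eval_append_skews_append_eq_zero (hs : ∀ x, s x ∈ selfAdjoint Q)
    (h_cube : ∀ x, s x ^ 3 = 0) {v w : Q} {bs : List Q} (h_skew : ∀ b ∈ bs, b ∈ skewAdjoint Q)
    (h_len : bs.length ≤ 2)
    (h_next : ∀ t : MixedWord ι Q, IsAdmissible t (bs.length + 1) → eval s t = 0)
    {p r : MixedWord ι Q} (h_sep : separators (p ++ r) = [v * w - w * v])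
    (h : IsAdmissible (p ++ bs.map .inr ++ r) bs.length) :
    eval s (p ++ bs.map .inr ++ r) = 0 := by
  rw [separators_append] at h_sep
  obtain ⟨hp, hr⟩ | ⟨hp, hr⟩ := List.append_eq_singleton_iff.1 h_sep
  · have h_reflect : reflect (p ++ bs.map .inr ++ r) =
        reflect r ++ (bs.map star).reverse.map .inr ++ reflect p := by
      rw [reflect_append, reflect_append, reflect_map_inr, List.append_assoc]
    have h_len' : (bs.map star).reverse.length = bs.length := by
      rw [List.length_reverse, List.length_map]
    rw [← star_eq_zero, ← eval_reflect hs, h_reflect]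
    refine eval_commutator_append_skews_append_eq_zero hs h_cube (v := star w) (w := star v)
      (fun b hb => ?_) (by rwa [h_len']) (by rwa [h_len']) ?_ ?_ ?_
    · rw [List.mem_reverse] at hb
      exact forall_star_mem_skewAdjoint h_skew b hb
    · rw [separators_reflect, hr, List.map_singleton, List.reverse_singleton, star_commutator]
    · rw [separators_reflect, hp, List.map_nil, List.reverse_nil]
    · rw [h_len', ← h_reflect]
      exact h.reflect
  · exact eval_commutator_append_skews_append_eq_zero hs h_cube h_skew h_len h_next hp hr h

theorem eval_append_skew_append_skew_append_eq_zero (hs : ∀ x, s x ∈ selfAdjoint Q)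
    (h_cube : ∀ x, s x ^ 3 = 0)
    (h_next : ∀ t : MixedWord ι Q, IsAdmissible t 3 → eval s t = 0) {v w b c : Q}
    (hb : b ∈ skewAdjoint Q) (hc : c ∈ skewAdjoint Q) {p m r : MixedWord ι Q}
    (h_sep : separators (p ++ m ++ r) = [v * w - w * v])
    (h : IsAdmissible (p ++ .inr b :: (m ++ .inr c :: r)) 2) :
    eval s (p ++ .inr b :: (m ++ .inr c :: r)) = 0 := by
  have h_skew : ∀ a ∈ [b, c], a ∈ skewAdjoint Q := by simp [hb, hc]
  obtain ⟨v', w', h_sep'⟩ := exists_separators_append_reflect_append_eq h_sep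
  have h_letters : (letters (p ++ reflect m ++ r)).Perm (letters (p ++ m ++ r)) := by
    simpa using ((letters_reflect_perm m).append_right (letters r)).append_left (letters p)
  have h_zero {p' r' : MixedWord ι Q} (h_eq : p' ++ r' = p ++ reflect m ++ r) :
      eval s (p' ++ [b, c].map .inr ++ r') = 0 := by
    rw [← h_eq] at h_sep' h_letters
    refine eval_append_skews_append_eq_zero hs h_cube h_skew le_rfl h_next h_sep'
      (h.of_letters_perm (by simpa using h_letters) (v := v') (w := w') ?_ h_skew rfl)
    have h_middle := (List.perm_append_comm_assoc (separators p') [b, c] (separators r')).trans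
      List.perm_append_comm
    rw [← separators_append, h_sep'] at h_middle
    simpa using h_middle
  have h_left := h_zero (p' := p ++ reflect m) (r' := r) rfl
  have h_right := h_zero (p' := p) (r' := reflect m ++ r) (by simp)
  have h_rel := skew_relation (star (eval s m)) hb hc
  simp only [eval_append, eval_reflect hs, eval_map_inr, eval_inr_cons, List.prod_cons,
    List.prod_nil, star_star] at h_left h_right h_rel ⊢
  linear_combination (norm := noncomm_ring) eval s p * h_rel * eval s r - h_left - h_right

theorem eval_eq_zero_of_succ (hs : ∀ x, s x ∈ selfAdjoint Q) (h_cube : ∀ x, s x ^ 3 = 0) {n : ℕ}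
    (hn : n ≤ 2) (h_next : ∀ t : MixedWord ι Q, IsAdmissible t (n + 1) → eval s t = 0)
    {t : MixedWord ι Q} (h : IsAdmissible t n) : eval s t = 0 := by
  have ⟨v, w, bs, _, h_sep, h_skew, h_len, _⟩ := h
  subst h_len
  match bs with
  | [] =>
    simpa using eval_append_skews_append_eq_zero hs h_cube (bs := []) (p := t) (r := [])
      h_skew hn h_next (by simpa using List.perm_singleton.1 h_sep) (by simpa using h)
  | [b] =>
    obtain ⟨p, r, rfl, h_pr⟩ := exists_eq_append_of_separators_perm (h_sep.trans (.swap _ _ _))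
    simpa using eval_append_skews_append_eq_zero hs h_cube (bs := [b]) (p := p) (r := r)
      h_skew hn h_next (List.perm_singleton.1 h_pr) (by simpa using h)
  | [b, c] =>
    obtain ⟨hb, hc, -⟩ := by simpa only [List.forall_mem_cons] using h_skew
    obtain ⟨p, r, rfl, h_pr⟩ := exists_eq_append_of_separators_perm (h_sep.trans (.swap _ _ _))
    obtain ⟨p', r', h_eq, h_pr'⟩ := exists_eq_append_of_separators_perm (h_pr.trans (.swap _ _ _))
    rw [List.perm_singleton] at h_pr'
    obtain ⟨k, rfl, rfl⟩ | ⟨k, rfl, hk⟩ := List.append_eq_append_iff.1 h_eq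
    · exact eval_append_skew_append_skew_append_eq_zero hs h_cube h_next hb hc h_pr' h
    · obtain ⟨rfl, rfl⟩ | ⟨k', rfl, rfl⟩ := List.cons_eq_append_iff.1 hk
      · rw [List.append_nil] at h ⊢
        exact eval_append_skew_append_skew_append_eq_zero hs h_cube h_next hb hc (m := [])
          (by rwa [List.append_nil]) h
      · rw [List.append_assoc, List.cons_append] at h ⊢
        exact eval_append_skew_append_skew_append_eq_zero hs h_cube h_next hc hb
          (by rwa [List.append_assoc]) h

theorem eval_eq_zero_of_isAdmissible (hs : ∀ x, s x ∈ selfAdjoint Q) (h_cube : ∀ x, s x ^ 3 = 0)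
    {n : ℕ} {t : MixedWord ι Q} (h : IsAdmissible t n) : eval s t = 0 := by
  obtain hn | hn := le_or_gt 3 n
  · exact eval_eq_zero_of_three_le h hn
  · exact eval_eq_zero_of_succ hs h_cube (Nat.le_of_lt_succ hn)
      (fun _ h' => eval_eq_zero_of_isAdmissible hs h_cube h') h
termination_by 3 - n

theorem eval_mul_eval_eq_zero (hs : ∀ x, s x ∈ selfAdjoint Q) (h_cube : ∀ x, s x ^ 3 = 0)
    {κ : Type*} {γ : κ → Q} {π : κ → ι} (hγ : ∀ k, γ k - s (π k) ∈ skewAdjoint Q)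
    {p : MixedWord ι Q} {r : MixedWord κ Q} {n : ℕ}
    (h : IsAdmissible (p ++ r.map (Sum.map π id)) n) : eval s p * eval γ r = 0 := by
  induction r generalizing p n with
  | nil =>
    rw [List.map_nil, List.append_nil] at h
    rw [eval_nil, mul_one, eval_eq_zero_of_isAdmissible hs h_cube h]
  | cons z r ih =>
    cases z with
    | inl k =>
      have h_letter := ih (p := p ++ [.inl (π k)]) (by simpa using h)
      have h_skew := ih (p := p ++ [.inr (γ k - s (π k))]) (n := n + 1) <| by
        rw [List.append_assoc]
        exact IsAdmissible.replace_letters (l := [π k]) (by simpa using h) (by simp) (hγ k)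
      simp only [eval_append, eval_inl_cons, eval_inr_cons, eval_nil, mul_one] at h_letter h_skew ⊢
      linear_combination (norm := noncomm_ring) h_letter + h_skew
    | inr A =>
      have h_separator := ih (p := p ++ [.inr A]) (by simpa using h)
      simp only [eval_append, eval_inr_cons, eval_nil, mul_one] at h_separator ⊢
      rwa [← mul_assoc]

end Admissible

end MixedWord

open MixedWord in
theorem IsNilThreeStarRing.prod_eq_zero {ι κ Q : Type*} [DecidableEq ι] [Ring Q] [StarRing Q]
    [IsNilThreeStarRing Q] {s : ι → Q} (hs : ∀ x, s x ∈ selfAdjoint Q) (h_cube : ∀ x, s x ^ 3 = 0)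
    {γ : κ → Q} {π : κ → ι} (hγ : ∀ k, γ k - s (π k) ∈ skewAdjoint Q) {v w : Q} {bs : List Q}
    (h_skew : ∀ b ∈ bs, b ∈ skewAdjoint Q) {us : List (List κ)} {T : Finset ι}
    (h_card : 6 ≤ 2 * bs.length + T.card) (h_count : ∀ x ∈ T, 3 ≤ (us.flatten.map π).count x)
    {L : List Q} (hL : L.Perm ((v * w - w * v) :: (bs ++ us.map fun u => (u.map γ).prod))) :
    L.prod = 0 := by
  set W : List (MixedWord κ Q) :=
    [.inr (v * w - w * v)] :: (bs.map (fun b => [.inr b]) ++ us.map (List.map .inl)) with hW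
  have h_eval : W.map (eval γ) = (v * w - w * v) :: (bs ++ us.map fun u => (u.map γ).prod) := by
    simp [hW, Function.comp_def]
  have h_letters : letters W.flatten = us.flatten := by
    simp [hW, letters_flatten, Function.comp_def]
  have h_separators : separators W.flatten = (v * w - w * v) :: bs := by
    have h_bs : (bs.map fun b => [b]).flatten = bs := List.flatMap_singleton' bs
    simp [hW, separators_flatten, Function.comp_def, h_bs]
  obtain ⟨W', h_perm, rfl⟩ : ∃ W' : List (MixedWord κ Q), W'.Perm W ∧ L = W'.map (eval γ) := by
    rw [← h_eval] at hL
    obtain ⟨W', h_map, h_perm⟩ : Relation.Comp (· = List.map (eval γ) ·) List.Perm L W := by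
      rwa [List.eq_map_comp_perm]
    exact ⟨W', h_perm, h_map⟩
  rw [← eval_flatten, ← one_mul (eval γ _), ← eval_nil s]
  refine eval_mul_eval_eq_zero hs h_cube hγ (n := bs.length)
    ⟨v, w, bs, T, ?_, h_skew, rfl, h_card, fun x hx => ?_⟩
  · rw [List.nil_append, separators_map_sumMap, List.map_id, ← h_separators]
    exact separators_perm h_perm.flatten
  · rw [List.nil_append, letters_map_sumMap,
      ((letters_perm h_perm.flatten).map π).count_eq, h_letters]
    exact h_count x hx

section Transpose

variable {F d}

@[simp] theorem tp_add (a b : FA F d) : tp F d (a + b) = tp F d a + tp F d b := by simp [tp]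

@[simp] theorem tp_neg (a : FA F d) : tp F d (-a) = -tp F d a := by simp [tp]

@[simp] theorem tp_sub (a b : FA F d) : tp F d (a - b) = tp F d a - tp F d b := by simp [tp]

@[simp] theorem tp_mul (a b : FA F d) : tp F d (a * b) = tp F d b * tp F d a := by simp [tp]

@[simp] theorem tp_smul (r : F) (a : FA F d) : tp F d (r • a) = r • tp F d a := by simp [tp]

@[simp] theorem tp_algebraMap (r : F) :
    tp F d (algebraMap F (FA F d) r) = algebraMap F (FA F d) r := by
  simp [tp]

@[simp] theorem tp_ι (x : Ltr d) : tp F d (FreeAlgebra.ι F x) = FreeAlgebra.ι F (x.1, !x.2) := by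
  simp [tp]

@[simp] theorem tp_tp (a : FA F d) : tp F d (tp F d a) = a := by
  induction a using FreeAlgebra.induction with
  | grade0 r => simp
  | grade1 x => simp
  | mul a b ha hb => rw [tp_mul, tp_mul, ha, hb]
  | add a b ha hb => rw [tp_add, tp_add, ha, hb]

@[simp] theorem tp_pow (a : FA F d) (n : ℕ) : tp F d (a ^ n) = tp F d a ^ n := by simp [tp]

@[simp] theorem tp_bar (a : FA F d) : tp F d (bar F d a) = -bar F d a := by
  rw [bar, tp_sub, tp_tp, neg_sub]

theorem tp_Trel (a b c : FA F d) : tp F d (Trel F d a b c) = Trel F d (tp F d a) c b := by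
  simp only [Trel, tp_add, tp_mul, tp_bar, tp_tp]
  noncomm_ring

theorem wordOf_append (l m : List (Ltr d)) :
    wordOf F d (l ++ m) = wordOf F d l * wordOf F d m := by
  rw [wordOf, List.map_append, List.prod_append, wordOf, wordOf]

theorem wordOf_singleton (x : Ltr d) : wordOf F d [x] = FreeAlgebra.ι F x := by
  rw [wordOf, List.map_singleton, List.prod_singleton]

theorem tp_wordOf (l : List (Ltr d)) :
    tp F d (wordOf F d l) = wordOf F d (l.map fun x => (x.1, !x.2)).reverse := by
  induction l with
  | nil => simp [wordOf, tp]
  | cons x l ih =>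
    rw [← List.singleton_append, wordOf_append, tp_mul, ih, wordOf_singleton, tp_ι,
      List.map_append, List.reverse_append, wordOf_append, List.map_singleton,
      List.reverse_singleton, wordOf_singleton]

end Transpose

section NonunitalPart

variable {F d}

theorem wordOf_mem_MFsub {l : List (Ltr d)} (hl : l ≠ []) : wordOf F d l ∈ MFsub F d :=
  Submodule.subset_span ⟨l, hl, rfl⟩

theorem ι_mem_MFsub (x : Ltr d) : FreeAlgebra.ι F x ∈ MFsub F d :=
  wordOf_singleton (F := F) x ▸ wordOf_mem_MFsub (List.cons_ne_nil x [])

theorem tp_mem_MFsub {a : FA F d} (ha : a ∈ MFsub F d) : tp F d a ∈ MFsub F d := by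
  rw [MFsub] at ha
  induction ha using Submodule.span_induction with
  | mem x hx =>
    obtain ⟨l, hl, rfl⟩ := hx
    rw [tp_wordOf]
    exact wordOf_mem_MFsub (by simpa using hl)
  | zero => simp [tp]
  | add x y _ _ hx hy => rw [tp_add]; exact Submodule.add_mem _ hx hy
  | smul r x _ hx => rw [tp_smul]; exact Submodule.smul_mem _ r hx

theorem mul_mem_MFsub {a b : FA F d} (ha : a ∈ MFsub F d) (hb : b ∈ MFsub F d) :
    a * b ∈ MFsub F d := by
  have h_mul : MFsub F d * MFsub F d ≤ MFsub F d := by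
    rw [MFsub, Submodule.span_mul_span, Submodule.span_le]
    rintro - ⟨-, ⟨l, hl, rfl⟩, -, ⟨m, -, rfl⟩, rfl⟩
    change wordOf F d l * wordOf F d m ∈ MFsub F d
    rw [← wordOf_append]
    exact wordOf_mem_MFsub (List.append_ne_nil_of_left_ne_nil hl m)
  exact h_mul (Submodule.mul_mem_mul ha hb)

theorem exists_mem_MFsub_eq_algebraMap_add (a : FA F d) :
    ∃ r : F, ∃ m ∈ MFsub F d, a = algebraMap F (FA F d) r + m := by
  induction a using FreeAlgebra.induction with
  | grade0 r => exact ⟨r, 0, zero_mem _, by rw [add_zero]⟩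
  | grade1 x => exact ⟨0, _, ι_mem_MFsub x, by rw [map_zero, zero_add]⟩
  | mul a b ha hb =>
    obtain ⟨r, m, hm, rfl⟩ := ha
    obtain ⟨t, k, hk, rfl⟩ := hb
    refine ⟨r * t, r • k + t • m + m * k, ?_, ?_⟩
    · exact add_mem (add_mem (Submodule.smul_mem _ _ hk) (Submodule.smul_mem _ _ hm))
        (mul_mem_MFsub hm hk)
    · rw [Algebra.smul_def, Algebra.smul_def, map_mul, Algebra.commutes t m]
      noncomm_ring
  | add a b ha hb =>
    obtain ⟨r, m, hm, rfl⟩ := ha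
    obtain ⟨t, k, hk, rfl⟩ := hb
    exact ⟨r + t, m + k, add_mem hm hk, by rw [map_add, add_add_add_comm]⟩

end NonunitalPart

section Quotient

variable {F d}

theorem pow_three_mem_idealA {a : FA F d} (ha : a ∈ MFsub F d) : a ^ 3 ∈ idealA F d :=
  TwoSidedIdeal.subset_span (.inl ⟨a, ha, rfl⟩)

theorem Trel_mem_idealA_of_mem_MFsub {a b c : FA F d} (ha : a ∈ MFsub F d) (hb : b ∈ MFsub F d)
    (hc : c ∈ MFsub F d) : Trel F d a b c ∈ idealA F d :=
  TwoSidedIdeal.subset_span (.inr ⟨a, ha, b, hb, c, hc, rfl⟩)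

theorem tp_mem_idealA {x : FA F d} (hx : x ∈ idealA F d) : tp F d x ∈ idealA F d := by
  have h_le : idealA F d ≤ (idealA F d).op.comap
      (FreeAlgebra.lift F fun p : Ltr d => op (FreeAlgebra.ι F (p.1, !p.2))) := by
    refine TwoSidedIdeal.span_le.2 ?_
    rintro - (⟨a, ha, rfl⟩ | ⟨a, ha, b, hb, c, hc, rfl⟩) <;>
      rw [SetLike.mem_coe, TwoSidedIdeal.mem_comap, TwoSidedIdeal.mem_op_iff, ← tp]
    · rw [tp_pow]
      exact pow_three_mem_idealA (tp_mem_MFsub ha)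
    · rw [tp_Trel]
      exact Trel_mem_idealA_of_mem_MFsub (tp_mem_MFsub ha) hc hb
  exact TwoSidedIdeal.mem_op_iff.1 ((TwoSidedIdeal.mem_comap _).1 (h_le hx))

variable (F d)

/-- The algebra `A_{3,d}` with a unit adjoined. -/
abbrev UnitalA := (idealA F d).ringCon.Quotient

/-- The quotient map from the free algebra onto `A_{3,d}` with a unit adjoined. -/
def toUnitalA : FA F d →+* UnitalA F d := (idealA F d).ringCon.mk'

instance : StarRing (UnitalA F d) where
  star := Quotient.map' (tp F d) fun x y hxy => by
    have h_sub := tp_mem_idealA (((idealA F d).rel_iff x y).1 hxy)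
    rw [tp_sub] at h_sub
    exact ((idealA F d).rel_iff _ _).2 h_sub
  star_involutive := Quotient.ind' fun a => congrArg (toUnitalA F d) (tp_tp a)
  star_add := Quotient.ind₂' fun a b => congrArg (toUnitalA F d) (tp_add a b)
  star_mul := Quotient.ind₂' fun a b => congrArg (toUnitalA F d) (tp_mul a b)

variable {F d}

theorem toUnitalA_surjective : Function.Surjective (toUnitalA F d) := RingCon.mk'_surjective _

theorem toUnitalA_eq_zero_iff {x : FA F d} : toUnitalA F d x = 0 ↔ x ∈ idealA F d := by
  rw [← TwoSidedIdeal.mem_ker (toUnitalA F d), toUnitalA, TwoSidedIdeal.ker_ringCon_mk']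

theorem star_toUnitalA (a : FA F d) : star (toUnitalA F d a) = toUnitalA F d (tp F d a) := rfl

theorem toUnitalA_bar_mem_skewAdjoint (a : FA F d) :
    toUnitalA F d (bar F d a) ∈ skewAdjoint (UnitalA F d) := by
  rw [skewAdjoint.mem_iff, star_toUnitalA, tp_bar, map_neg]

end Quotient

section CharThree

theorem add_add_self_eq_zero_of_charP {F : Type*} [Semiring F] [CharP F 3] {M : Type*}
    [AddCommMonoid M] [Module F M] (a : M) : a + a + a = 0 := by
  have h_three : (3 : ℕ) • a = 0 := by
    rw [← Nat.cast_smul_eq_nsmul F, CharP.cast_eq_zero, zero_smul]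
  rwa [succ_nsmul, two_nsmul] at h_three

theorem polarized_cube_eq_zero_of_commute {R : Type*} [Ring R] (h_three : ∀ a : R, a + a + a = 0)
    {x : R} (hx : ∀ y, Commute x y) (y z : R) :
    x * y * z + x * z * y + y * x * z + y * z * x + z * x * y + z * y * x = 0 := by
  rw [← (hx y).eq, ← (hx z).eq, ← (hx (y * z)).eq, ← (hx (z * y)).eq]
  linear_combination (norm := noncomm_ring) h_three (x * (y * z)) + h_three (x * (z * y))

variable {F d}

theorem polarized_cube_mem_idealA_of_mem_MFsub {a b c : FA F d} (ha : a ∈ MFsub F d)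
    (hb : b ∈ MFsub F d) (hc : c ∈ MFsub F d) :
    a * b * c + a * c * b + b * a * c + b * c * a + c * a * b + c * b * a ∈ idealA F d := by
  have h_polarization :
      a * b * c + a * c * b + b * a * c + b * c * a + c * a * b + c * b * a =
        (a + b + c) ^ 3 - (a + b) ^ 3 - (a + c) ^ 3 - (b + c) ^ 3 + a ^ 3 + b ^ 3 + c ^ 3 := by
    noncomm_ring
  have h_cube {x : FA F d} (hx : x ∈ MFsub F d) := pow_three_mem_idealA hx
  rw [h_polarization]
  exact add_mem (add_mem (add_mem (sub_mem (sub_mem (sub_mem (h_cube (add_mem (add_mem ha hb) hc))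
    (h_cube (add_mem ha hb))) (h_cube (add_mem ha hc))) (h_cube (add_mem hb hc)))
    (h_cube ha)) (h_cube hb)) (h_cube hc)

variable [CharP F 3]

theorem polarized_cube_mem_idealA (a b c : FA F d) :
    a * b * c + a * c * b + b * a * c + b * c * a + c * a * b + c * b * a ∈ idealA F d := by
  obtain ⟨r, a, ha, rfl⟩ := exists_mem_MFsub_eq_algebraMap_add a
  obtain ⟨t, b, hb, rfl⟩ := exists_mem_MFsub_eq_algebraMap_add b
  obtain ⟨k, c, hc, rfl⟩ := exists_mem_MFsub_eq_algebraMap_add c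
  have h_scalar (r : F) := polarized_cube_eq_zero_of_commute
    (add_add_self_eq_zero_of_charP (F := F)) (Algebra.commute_algebraMap_left (A := FA F d) r)
  convert polarized_cube_mem_idealA_of_mem_MFsub ha hb hc using 1
  linear_combination (norm := noncomm_ring)
    h_scalar r (algebraMap F _ t + b) (algebraMap F _ k + c)
      + h_scalar t a (algebraMap F _ k + c) + h_scalar k a b

theorem Trel_mem_idealA (a b c : FA F d) : Trel F d a b c ∈ idealA F d := by
  obtain ⟨r, a, ha, rfl⟩ := exists_mem_MFsub_eq_algebraMap_add a
  obtain ⟨t, b, hb, rfl⟩ := exists_mem_MFsub_eq_algebraMap_add b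
  obtain ⟨k, c, hc, rfl⟩ := exists_mem_MFsub_eq_algebraMap_add c
  have h_bar (r : F) (x : FA F d) : bar F d (algebraMap F _ r + x) = bar F d x := by
    rw [bar, tp_add, tp_algebraMap, add_sub_add_left_eq_sub, bar]
  convert Trel_mem_idealA_of_mem_MFsub ha hb hc using 1
  rw [Trel, Trel, h_bar, h_bar, tp_add, tp_algebraMap]
  linear_combination (norm := noncomm_ring)
    add_add_self_eq_zero_of_charP (F := F) (algebraMap F (FA F d) r * bar F d b * bar F d c)
      - Algebra.commutes r (bar F d b) * bar F d c - Algebra.commutes r (bar F d b * bar F d c)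

-- Since one half is `-1`, a skew element is the bar of the negative of any of its lifts.
theorem exists_toUnitalA_bar_eq {q : UnitalA F d} (hq : q ∈ skewAdjoint (UnitalA F d)) :
    ∃ b, toUnitalA F d (bar F d b) = q := by
  obtain ⟨b, rfl⟩ := toUnitalA_surjective q
  rw [skewAdjoint.mem_iff, star_toUnitalA] at hq
  have h_three := congrArg (toUnitalA F d) (add_add_self_eq_zero_of_charP (F := F) b)
  refine ⟨-b, ?_⟩
  rw [bar, tp_neg, map_sub, map_neg, map_neg, hq]
  rw [map_add, map_add, map_zero] at h_three
  linear_combination (norm := abel) -h_three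

instance : IsNilThreeStarRing (UnitalA F d) where
  add_add_self q := by
    obtain ⟨a, rfl⟩ := toUnitalA_surjective q
    rw [← map_add, ← map_add, add_add_self_eq_zero_of_charP (F := F), map_zero]
  polarized_cube p q r := by
    obtain ⟨a, rfl⟩ := toUnitalA_surjective p
    obtain ⟨b, rfl⟩ := toUnitalA_surjective q
    obtain ⟨c, rfl⟩ := toUnitalA_surjective r
    simpa only [map_add, map_mul] using
      toUnitalA_eq_zero_iff.2 (polarized_cube_mem_idealA a b c)
  skew_relation p q r hq hr := by
    obtain ⟨a, rfl⟩ := toUnitalA_surjective p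
    obtain ⟨b, rfl⟩ := exists_toUnitalA_bar_eq hq
    obtain ⟨c, rfl⟩ := exists_toUnitalA_bar_eq hr
    simpa only [Trel, map_add, map_mul, star_toUnitalA] using
      toUnitalA_eq_zero_iff.2 (Trel_mem_idealA a b c)

end CharThree

section SymmetricLetters

/-- The symmetric part of the letters `x_i` and `x_iᵀ`, where in characteristic 3 one half
is `-1`. -/
def symmLetter (i : Fin d) : UnitalA F d :=
  toUnitalA F d (-(FreeAlgebra.ι F (i, false) + FreeAlgebra.ι F (i, true)))

variable {F d}

theorem symmLetter_fst (x : Ltr d) :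
    symmLetter F d x.1 = toUnitalA F d (-(FreeAlgebra.ι F x + tp F d (FreeAlgebra.ι F x))) := by
  obtain ⟨i, _ | _⟩ := x
  · rw [symmLetter, tp_ι, Bool.not_false]
  · rw [symmLetter, tp_ι, Bool.not_true, add_comm]

theorem symmLetter_mem_selfAdjoint (i : Fin d) :
    symmLetter F d i ∈ selfAdjoint (UnitalA F d) := by
  rw [selfAdjoint.mem_iff, symmLetter_fst (i, false), star_toUnitalA, tp_neg, tp_add, tp_tp,
    add_comm]

theorem symmLetter_pow_three (i : Fin d) : symmLetter F d i ^ 3 = 0 := by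
  rw [symmLetter, ← map_pow, toUnitalA_eq_zero_iff]
  exact pow_three_mem_idealA (neg_mem (add_mem (ι_mem_MFsub _) (ι_mem_MFsub _)))

theorem toUnitalA_ι_sub_symmLetter_mem_skewAdjoint [CharP F 3] (x : Ltr d) :
    toUnitalA F d (FreeAlgebra.ι F x) - symmLetter F d x.1 ∈ skewAdjoint (UnitalA F d) := by
  have h_bar : toUnitalA F d (FreeAlgebra.ι F x) - symmLetter F d x.1 =
      toUnitalA F d (bar F d (-FreeAlgebra.ι F x)) := by
    rw [symmLetter_fst, ← map_sub, bar, tp_neg]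
    congr 1
    linear_combination (norm := abel) add_add_self_eq_zero_of_charP (F := F) (FreeAlgebra.ι F x)
  rw [h_bar]
  exact toUnitalA_bar_mem_skewAdjoint _

end SymmetricLetters

theorem stmt12_general (F : Type) [Field F] [CharP F 3] (d m n : ℕ) (S : Finset (Fin d))
    (hS : 6 ≤ 2 * m + S.card) (a : Fin m → FA F d) (v w : FA F d) (u : Fin n → List (Ltr d))
    (hdeg : ∀ i ∈ S, 3 ≤ ∑ j, ((u j).map Prod.fst).count i) (L : List (FA F d))
    (hL : L.Perm ((v * w - w * v) ::
      ((List.ofFn fun i => bar F d (a i)) ++ List.ofFn fun j => wordOf F d (u j)))) :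
    L.prod ∈ idealA F d := by
  rw [← toUnitalA_eq_zero_iff, map_list_prod]
  refine IsNilThreeStarRing.prod_eq_zero symmLetter_mem_selfAdjoint symmLetter_pow_three
    toUnitalA_ι_sub_symmLetter_mem_skewAdjoint
    (bs := List.ofFn fun i => toUnitalA F d (bar F d (a i))) (us := List.ofFn u) (T := S)
    (v := toUnitalA F d v) (w := toUnitalA F d w) ?_ ?_ ?_ ?_
  · simp [List.mem_ofFn, toUnitalA_bar_mem_skewAdjoint]
  · rwa [List.length_ofFn]
  · simpa [List.count_flatten, List.map_flatten, List.sum_ofFn, Function.comp_def] using hdeg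
  · simpa [wordOf, map_list_prod, Function.comp_def] using hL.map (toUnitalA F d)

/-- let `char F = 3`, `1 ≤ s ≤ 4`, let `x_{idx 1}, …, x_{idx (8-2s)}` be pairwise
different letters, `a₁, …, a_{s-1}, v, w ∈ M`, `u₁, …, u_{s+1} ∈ M₁` with
`deg_{x_{idx i}}(u₁ ⋯ u_{s+1}) = 3` for all `i`.  Then the product of the `2s+1` elements
`vw − wv, ā₁, …, ā_{s−1}, u₁, …, u_{s+1}` taken in any order is zero in `A_{3,d}`. -/
theorem stmt12 (F : Type) [Field F] [Infinite F] [CharP F 3] (d : ℕ) (s : ℕ)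
    (hs1 : 1 ≤ s) (hs : s ≤ 4)
    (idx : Fin (8 - 2 * s) → Fin d) (hidx : Function.Injective idx)
    (a : Fin (s - 1) → List (Ltr d)) (ha : ∀ i, a i ≠ [])
    (v w : List (Ltr d)) (hv : v ≠ []) (hw : w ≠ [])
    (u : Fin (s + 1) → List (Ltr d))
    (hdeg : ∀ i : Fin (8 - 2 * s),
      (∑ j : Fin (s + 1), (u j).count ((idx i, false) : Ltr d)) = 3)
    (L : List (FA F d))
    (hL : L.Perm ((wordOf F d v * wordOf F d w - wordOf F d w * wordOf F d v) ::
      ((List.ofFn fun i : Fin (s - 1) => bar F d (wordOf F d (a i))) ++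
       List.ofFn fun j : Fin (s + 1) => wordOf F d (u j)))) :
    L.prod ∈ idealA F d := by
  refine stmt12_general F d (s - 1) (s + 1) (Finset.univ.map ⟨idx, hidx⟩) ?_
    (fun i => wordOf F d (a i)) (wordOf F d v) (wordOf F d w) u ?_ L hL
  · rw [Finset.card_map, Finset.card_univ, Fintype.card_fin]
    lia
  · rw [Finset.forall_mem_map]
    exact fun i _ => (hdeg i).ge.trans
      (Finset.sum_le_sum fun j _ => List.count_le_count_map (f := Prod.fst))
end

section
/- Let F be an infinite field with char(F) ≠ 2 and let X = X_1 be a generic 3×3 matrix with X̄ = X − Xᵀ. Then the invariant tr(X² X̄² X X̄) ∈ R^{O(3)} is indecomposable, i.e., it does not lie in the square of the ideal of R^{O(3)} generated by all homogeneous invariants of positive degree. -/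
open Matrix MvPolynomial

/-- The polynomial ring `R = F[x_{ij}(k)]`, `1 ≤ i,j ≤ 3`, `1 ≤ k ≤ d`. -/
abbrev Rpoly (F : Type) [Field F] (d : ℕ) := MvPolynomial (Fin 3 × Fin 3 × Fin d) F

variable (F : Type) [Field F] (d : ℕ)

/-- The `k`-th generic 3×3 matrix `X_k`. -/
noncomputable def genMat (k : Fin d) : Matrix (Fin 3) (Fin 3) (Rpoly F d) :=
  Matrix.of fun i j => MvPolynomial.X (i, j, k)

/-- The action of `g` on `R` by simultaneous conjugation: entries of `X_k` are replaced
by the entries of `gᵀ X_k g`. -/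
noncomputable def actHom (g : Matrix (Fin 3) (Fin 3) F) : Rpoly F d →ₐ[F] Rpoly F d :=
  MvPolynomial.aeval fun p : Fin 3 × Fin 3 × Fin d =>
    ((g.map (algebraMap F (Rpoly F d)))ᵀ * genMat F d p.2.2 *
      g.map (algebraMap F (Rpoly F d))) p.1 p.2.1

/-- The algebra `R^{O(3)}` of invariants of the orthogonal group. -/
noncomputable def invAlg : Subalgebra F (Rpoly F d) where
  carrier := {f | ∀ g : Matrix (Fin 3) (Fin 3) F, gᵀ * g = 1 → actHom F d g f = f}
  mul_mem' := by
    intro a b ha hb g hg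
    rw [_root_.map_mul, ha g hg, hb g hg]
  add_mem' := by
    intro a b ha hb g hg
    rw [_root_.map_add, ha g hg, hb g hg]
  one_mem' := by
    intro g hg
    exact map_one _
  algebraMap_mem' := by
    intro r g hg
    exact (actHom F d g).commutes r

/-- The ideal of `R^{O(3)}` generated by all homogeneous invariants of positive degree. -/
noncomputable def plusIdeal : Ideal (invAlg F d) :=
  Ideal.span {f | ∃ n : ℕ, 0 < n ∧ MvPolynomial.IsHomogeneous (f : Rpoly F d) n}

/-- The set of decomposable invariants: elements of `R^{O(3)}` lying in the square of the
ideal generated by all homogeneous invariants of positive degree. -/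
noncomputable def decompSet : Set (Rpoly F d) :=
  Subtype.val '' ((plusIdeal F d ^ 2 : Ideal (invAlg F d)) : Set (invAlg F d))

/-! Restrict invariants to the slice of matrices `diag(s) + [a]ₓ`, a diagonal matrix plus a general
skew-symmetric one. The restricted polynomials in `s` and `a` are fixed by the signed permutation
matrices. The diagonal sign matrices force a monomial of odd degree in `a` to have an odd exponent
in each `aᵢ`; a transposition exchanges two of the pairs `(sᵢ, aᵢ)` and negates `a`, so the three
pairs of exponents of `(sᵢ, aᵢ)` have to be distinct. Such a monomial has degree at least `6`. In a
product of two invariants without constant term every monomial of odd degree in `a` therefore has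
degree at least `7`, whereas the part of `tr(X² X̄² X X̄)` of odd degree in `a` is the nonzero
polynomial `8 a₀a₁a₂ (s₀ - s₁)(s₀ - s₂)(s₁ - s₂)` of degree `6`.
-/

section TraceWord

variable {n R S : Type*} [Fintype n] [DecidableEq n] [CommRing R] [CommRing S]

/-- The expression `tr(X² X̄² X X̄)` with `X̄ = X - Xᵀ`, for a square matrix over any commutative
ring. -/
def traceWord (M : Matrix n n R) : R :=
  trace (M ^ 2 * (M - Mᵀ) ^ 2 * M * (M - Mᵀ))

lemma map_traceWord {H : Type*} [FunLike H R S] [RingHomClass H R S] (f : H) (M : Matrix n n R) :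
    f (traceWord M) = traceWord (M.map f) := by
  simp only [traceWord, AddMonoidHom.map_trace, pow_two, Matrix.map_mul,
    Matrix.map_sub f (map_sub f), transpose_map]

lemma traceWord_transpose_mul_mul {G : Matrix n n R} (hG : Gᵀ * G = 1) (M : Matrix n n R) :
    traceWord (Gᵀ * M * G) = traceWord M := by
  have hG' : G * Gᵀ = 1 := mul_eq_one_comm.mp hG
  have conj_mul (A B : Matrix n n R) : Gᵀ * A * G * (Gᵀ * B * G) = Gᵀ * (A * B) * G := by
    calc Gᵀ * A * G * (Gᵀ * B * G) = Gᵀ * A * (G * Gᵀ) * B * G := by noncomm_ring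
      _ = Gᵀ * (A * B) * G := by rw [hG']; noncomm_ring
  have conj_sub : Gᵀ * M * G - (Gᵀ * M * G)ᵀ = Gᵀ * (M - Mᵀ) * G := by
    simp only [transpose_mul, transpose_transpose]
    noncomm_ring
  simp only [traceWord, conj_sub, pow_two, conj_mul]
  rw [trace_mul_comm, ← Matrix.mul_assoc, hG', Matrix.one_mul]

end TraceWord

section DiagAddSkew

variable {R S : Type*} [CommRing R] [CommRing S]

/-- The matrix `diag(s) + [a]ₓ`, where `[a]ₓ` is the skew-symmetric matrix of the cross product with
`a`. These matrices form the slice to which invariants are restricted. -/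
def diagAddSkew (s a : Fin 3 → R) : Matrix (Fin 3) (Fin 3) R :=
  !![s 0, -a 2, a 1; a 2, s 1, -a 0; -a 1, a 0, s 2]

lemma transpose_diagAddSkew (s a : Fin 3 → R) : (diagAddSkew s a)ᵀ = diagAddSkew s (-a) := by
  ext i j
  fin_cases i <;> fin_cases j <;> simp [diagAddSkew]

lemma diagAddSkew_sub_diagAddSkew (s s' a a' : Fin 3 → R) :
    diagAddSkew s a - diagAddSkew s' a' = diagAddSkew (s - s') (a - a') := by
  ext i j
  fin_cases i <;> fin_cases j <;> simp [diagAddSkew, sub_eq_add_neg, add_comm]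

lemma map_diagAddSkew {H : Type*} [FunLike H R S] [RingHomClass H R S] (f : H) (s a : Fin 3 → R) :
    (diagAddSkew s a).map f = diagAddSkew (f ∘ s) (f ∘ a) := by
  ext i j
  fin_cases i <;> fin_cases j <;> simp [diagAddSkew]

lemma diagonal_mul_diagAddSkew_mul_diagonal {ε : Fin 3 → R} (hε : ∀ i, ε i * ε i = 1)
    (hε' : ∏ i, ε i = 1) (s a : Fin 3 → R) :
    diagonal ε * diagAddSkew s a * diagonal ε = diagAddSkew s (ε * a) := by
  rw [Fin.prod_univ_three] at hε'
  have h01 : ε 0 * ε 1 = ε 2 := by linear_combination ε 2 * hε' - ε 0 * ε 1 * hε 2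
  have h02 : ε 0 * ε 2 = ε 1 := by linear_combination ε 1 * hε' - ε 0 * ε 2 * hε 1
  have h12 : ε 1 * ε 2 = ε 0 := by linear_combination ε 0 * hε' - ε 1 * ε 2 * hε 0
  have h10 := (mul_comm _ _).trans h01
  have h20 := (mul_comm _ _).trans h02
  have h21 := (mul_comm _ _).trans h12
  ext i j
  rw [mul_diagonal, diagonal_mul, mul_right_comm]
  fin_cases i <;> fin_cases j <;> simp [diagAddSkew, hε, h01, h02, h12, h10, h20, h21]

lemma submatrix_swap_diagAddSkew {i j : Fin 3} (hij : i ≠ j) (s a : Fin 3 → R) :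
    (diagAddSkew s a).submatrix (Equiv.swap i j) (Equiv.swap i j) =
      diagAddSkew (s ∘ Equiv.swap i j) (-(a ∘ Equiv.swap i j)) := by
  ext k l
  fin_cases i <;> fin_cases j <;> try exact absurd rfl hij
  all_goals fin_cases k <;> fin_cases l <;> simp [diagAddSkew, Equiv.swap_apply_def]

lemma traceWord_diagAddSkew_sub (s a : Fin 3 → R) :
    traceWord (diagAddSkew s a) - traceWord (diagAddSkew s (-a)) =
      16 * (a 0 * a 1 * a 2 * ((s 0 - s 1) * (s 0 - s 2) * (s 1 - s 2))) := by
  have skew_part (b : Fin 3 → R) :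
      diagAddSkew s b - (diagAddSkew s b)ᵀ = diagAddSkew 0 (2 * b) := by
    rw [transpose_diagAddSkew, diagAddSkew_sub_diagAddSkew, sub_self, sub_neg_eq_add, two_mul]
  simp only [traceWord, skew_part]
  simp only [diagAddSkew, pow_two, mul_fin_three, trace_fin_three_of, Pi.mul_apply, Pi.neg_apply,
    Pi.ofNat_apply]
  ring

end DiagAddSkew

section ScaleRename

variable {ι κ R : Type*} [CommSemiring R]

/-- The substitution `Xᵢ ↦ cᵢ X_{σ i}`, by which a monomial matrix acts on polynomials. -/
noncomputable def scaleRename (c : ι → R) (σ : ι → κ) : MvPolynomial ι R →ₐ[R] MvPolynomial κ R :=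
  aeval fun i => C (c i) * X (σ i)

lemma scaleRename_monomial (c : ι → R) (σ : ι → κ) (m : ι →₀ ℕ) (r : R) :
    scaleRename c σ (monomial m r) =
      monomial (m.mapDomain σ) ((m.prod fun i k => c i ^ k) * r) := by
  have scale : (m.prod fun i k => C (c i) ^ k : MvPolynomial κ R) =
      C (m.prod fun i k => c i ^ k) := by
    simp only [Finsupp.prod, map_prod, map_pow]
  have shift : (m.prod fun i k => X (σ i) ^ k : MvPolynomial κ R) = monomial (m.mapDomain σ) 1 := by
    rw [← rename_monomial, monomial_eq, C_1, one_mul]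
    simp only [Finsupp.prod, map_prod, map_pow, rename_X]
  rw [scaleRename, aeval_monomial]
  simp only [mul_pow, Finsupp.prod_mul]
  rw [scale, shift, algebraMap_eq, C_mul_monomial, C_mul_monomial]
  congr 1
  ring

lemma coeff_mapDomain_scaleRename (c : ι → R) {σ : ι → κ} (hσ : σ.Injective)
    (f : MvPolynomial ι R) (m : ι →₀ ℕ) :
    coeff (m.mapDomain σ) (scaleRename c σ f) = (m.prod fun i k => c i ^ k) * coeff m f := by
  classical
  induction f using MvPolynomial.induction_on' with
  | monomial u r =>
    simp only [scaleRename_monomial, coeff_monomial, (Finsupp.mapDomain_injective hσ).eq_iff]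
    split_ifs with h
    · rw [h]
    · rw [mul_zero]
  | add p q hp hq => rw [map_add, coeff_add, coeff_add, hp, hq, mul_add]

lemma coeff_scaleRename_id (c : ι → R) (f : MvPolynomial ι R) (m : ι →₀ ℕ) :
    coeff m (scaleRename c id f) = (m.prod fun i k => c i ^ k) * coeff m f := by
  simpa using coeff_mapDomain_scaleRename c Function.injective_id f m

lemma prod_pow_ne_neg_one_of_coeff_ne_zero {R : Type*} [CommRing R] [NoZeroDivisors R]
    (h2 : (2 : R) ≠ 0) {c : ι → R} {σ : ι → ι} (hσ : σ.Injective) {f : MvPolynomial ι R}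
    (hf : scaleRename c σ f = f) {m : ι →₀ ℕ} (hm : m.mapDomain σ = m) (hmf : coeff m f ≠ 0) :
    (m.prod fun i k => c i ^ k) ≠ -1 := by
  intro hc
  have h := coeff_mapDomain_scaleRename c hσ f m
  rw [hm, hf, hc] at h
  exact mul_ne_zero h2 hmf (by linear_combination h)

end ScaleRename

section GenericEvaluation

variable {F d} {A B : Type*} [CommSemiring A] [Algebra F A] [CommSemiring B] [Algebra F B]

/-- Evaluation of polynomials in the entries of `X_1, …, X_d` at a tuple of `3 × 3` matrices. -/
noncomputable def evalMatrices (Y : Fin d → Matrix (Fin 3) (Fin 3) A) : Rpoly F d →ₐ[F] A :=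
  aeval fun p => Y p.2.2 p.1 p.2.1

lemma map_genMat_evalMatrices (Y : Fin d → Matrix (Fin 3) (Fin 3) A) (k : Fin d) :
    (genMat F d k).map (evalMatrices Y) = Y k := by
  ext i j
  simp [evalMatrices, genMat]

lemma evalMatrices_traceWord_genMat {A : Type*} [CommRing A] [Algebra F A]
    (Y : Fin d → Matrix (Fin 3) (Fin 3) A) (k : Fin d) :
    evalMatrices Y (traceWord (genMat F d k)) = traceWord (Y k) := by
  rw [map_traceWord, map_genMat_evalMatrices]

lemma map_evalMatrices (φ : A →ₐ[F] B) (Y : Fin d → Matrix (Fin 3) (Fin 3) A) (p : Rpoly F d) :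
    φ (evalMatrices Y p) = evalMatrices (fun k => (Y k).map φ) p :=
  comp_aeval_apply ..

lemma actHom_eq_evalMatrices (g : Matrix (Fin 3) (Fin 3) F) :
    actHom F d g = evalMatrices fun k =>
      (g.map (algebraMap F (Rpoly F d)))ᵀ * genMat F d k * g.map (algebraMap F (Rpoly F d)) := rfl

lemma evalMatrices_actHom (Y : Fin d → Matrix (Fin 3) (Fin 3) A) (g : Matrix (Fin 3) (Fin 3) F)
    (p : Rpoly F d) :
    evalMatrices Y (actHom F d g p) = evalMatrices
      (fun k => (g.map (algebraMap F A))ᵀ * Y k * g.map (algebraMap F A)) p := by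
  have map_scalar (h : Matrix (Fin 3) (Fin 3) F) :
      (h.map (algebraMap F (Rpoly F d))).map (evalMatrices Y) = h.map (algebraMap F A) := by
    ext i j
    exact (evalMatrices Y).commutes (h i j)
  simp only [actHom_eq_evalMatrices, map_evalMatrices, Matrix.map_mul, ← transpose_map,
    map_genMat_evalMatrices, map_scalar]

lemma traceWord_genMat_mem_invAlg (k : Fin d) : traceWord (genMat F d k) ∈ invAlg F d := by
  intro g hg
  have hG : (g.map (algebraMap F (Rpoly F d)))ᵀ * g.map (algebraMap F (Rpoly F d)) = 1 := by
    rw [← transpose_map, ← Matrix.map_mul, hg, Matrix.map_one _ (map_zero _) (map_one _)]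
  rw [actHom_eq_evalMatrices, evalMatrices_traceWord_genMat, traceWord_transpose_mul_mul hG]

end GenericEvaluation

section Slice

variable {F d}

/-- The generic element of the slice `diag(s) + [a]ₓ`: its coordinates `sᵢ` and `aᵢ` are the
variables indexed by `Sum.inl i` and `Sum.inr i`. -/
noncomputable def genericSlice (F : Type) [Field F] :
    Matrix (Fin 3) (Fin 3) (MvPolynomial (Fin 3 ⊕ Fin 3) F) :=
  diagAddSkew (X ∘ Sum.inl) (X ∘ Sum.inr)

/-- Restriction of polynomials on `d`-tuples of matrices to the diagonally embedded slice: every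
`X_k` is replaced by the same generic element of the slice. -/
noncomputable def restrictSlice : Rpoly F d →ₐ[F] MvPolynomial (Fin 3 ⊕ Fin 3) F :=
  evalMatrices fun _ => genericSlice F

/-- The degree of a monomial on the slice in the skew-symmetric coordinates `aᵢ`. -/
def skewDegree (m : Fin 3 ⊕ Fin 3 →₀ ℕ) : ℕ :=
  ∑ i, m (Sum.inr i)

lemma skewDegree_add (u v : Fin 3 ⊕ Fin 3 →₀ ℕ) :
    skewDegree (u + v) = skewDegree u + skewDegree v := by
  simp only [skewDegree, Finsupp.add_apply, Finset.sum_add_distrib]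

lemma prod_sumElim_one_pow {M : Type*} [CommMonoid M] (ε : Fin 3 → M) (m : Fin 3 ⊕ Fin 3 →₀ ℕ) :
    (m.prod fun i k => (Sum.elim 1 ε : Fin 3 ⊕ Fin 3 → M) i ^ k) = ∏ i, ε i ^ m (Sum.inr i) := by
  simp [Finsupp.prod_fintype]

lemma prod_sumElim_one_neg_one_pow {R : Type*} [CommRing R] (m : Fin 3 ⊕ Fin 3 →₀ ℕ) :
    (m.prod fun i k => (Sum.elim 1 (-1) : Fin 3 ⊕ Fin 3 → R) i ^ k) = (-1) ^ skewDegree m := by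
  rw [prod_sumElim_one_pow, skewDegree, ← Finset.prod_pow_eq_pow_sum]
  rfl

lemma map_genericSlice_scaleRename (ε : Fin 3 → F) (σ : Fin 3 → Fin 3) :
    (genericSlice F).map (scaleRename (Sum.elim 1 ε) (Sum.map σ σ)) =
      diagAddSkew (X ∘ Sum.inl ∘ σ) ((C ∘ ε) * (X ∘ Sum.inr ∘ σ)) := by
  rw [genericSlice, map_diagAddSkew]
  congr 1 <;> ext1 i <;> simp [scaleRename]

lemma constantCoeff_restrictSlice (p : Rpoly F d) :
    constantCoeff (restrictSlice p) = constantCoeff p := by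
  have h : constantCoeff.comp (restrictSlice : Rpoly F d →ₐ[F] _).toRingHom = constantCoeff := by
    refine MvPolynomial.ringHom_ext (fun r => ?_) fun ⟨i, j, k⟩ => ?_
    · simp [restrictSlice, evalMatrices]
    · fin_cases i <;> fin_cases j <;>
        simp [restrictSlice, evalMatrices, genericSlice, diagAddSkew]
  exact RingHom.congr_fun h p

lemma scaleRename_restrictSlice {g : Matrix (Fin 3) (Fin 3) F} (hg : gᵀ * g = 1)
    {ε : Fin 3 → F} {σ : Fin 3 → Fin 3}
    (hslice : (g.map C)ᵀ * genericSlice F * g.map C =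
      diagAddSkew (X ∘ Sum.inl ∘ σ) ((C ∘ ε) * (X ∘ Sum.inr ∘ σ)))
    {p : Rpoly F d} (hp : p ∈ invAlg F d) :
    scaleRename (Sum.elim 1 ε) (Sum.map σ σ) (restrictSlice p) = restrictSlice p := by
  calc scaleRename (Sum.elim 1 ε) (Sum.map σ σ) (restrictSlice p)
      = evalMatrices (fun _ => (g.map C)ᵀ * genericSlice F * g.map C) p := by
        rw [restrictSlice, map_evalMatrices, map_genericSlice_scaleRename, hslice]
    _ = restrictSlice (actHom F d g p) := (evalMatrices_actHom _ g p).symm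
    _ = restrictSlice p := by rw [hp g hg]

lemma scaleRename_diagonal_restrictSlice {ε : Fin 3 → F} (hε : ∀ i, ε i * ε i = 1)
    (hε' : ∏ i, ε i = 1) {p : Rpoly F d} (hp : p ∈ invAlg F d) :
    scaleRename (Sum.elim 1 ε) id (restrictSlice p) = restrictSlice p := by
  have hg : (diagonal ε)ᵀ * diagonal ε = 1 := by
    rw [diagonal_transpose, diagonal_mul_diagonal, ← diagonal_one]
    exact congrArg diagonal (funext hε)
  rw [← Sum.map_id_id]
  refine scaleRename_restrictSlice hg ?_ hp
  rw [diagonal_map (map_zero C), diagonal_transpose]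
  exact diagonal_mul_diagAddSkew_mul_diagonal (fun i => by simp [← C_mul, hε])
    (by simp [← map_prod, hε']) _ _

lemma scaleRename_swap_restrictSlice {i j : Fin 3} (hij : i ≠ j) {p : Rpoly F d}
    (hp : p ∈ invAlg F d) :
    scaleRename (Sum.elim 1 (-1)) (Sum.map (Equiv.swap i j) (Equiv.swap i j)) (restrictSlice p) =
      restrictSlice p := by
  have permMatrix_map : ((Equiv.swap i j).permMatrix F).map C =
      (Equiv.swap i j).permMatrix (MvPolynomial (Fin 3 ⊕ Fin 3) F) :=
    PEquiv.map_toMatrix C _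
  refine scaleRename_restrictSlice (g := (Equiv.swap i j).permMatrix F) ?_ ?_ hp
  · rw [transpose_permMatrix, ← permMatrix_mul, mul_inv_cancel, permMatrix_one]
  · rw [permMatrix_map, transpose_permMatrix, Equiv.swap_inv, PEquiv.toMatrix_toPEquiv_mul,
      PEquiv.mul_toMatrix_toPEquiv, submatrix_submatrix, Equiv.symm_swap]
    refine (submatrix_swap_diagAddSkew hij _ _).trans ?_
    congr 1
    ext1 k
    simp

lemma odd_inr_of_coeff_restrictSlice_ne_zero (h2 : (2 : F) ≠ 0) {p : Rpoly F d}
    (hp : p ∈ invAlg F d) {m : Fin 3 ⊕ Fin 3 →₀ ℕ} (hm : coeff m (restrictSlice p) ≠ 0)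
    (hodd : Odd (skewDegree m)) (i : Fin 3) : Odd (m (Sum.inr i)) := by
  let ε : Fin 3 → F := -Pi.mulSingle i (-1)
  have hε (j : Fin 3) : ε j * ε j = 1 := by
    by_cases h : j = i <;> simp [ε, h]
  have hε' : ∏ j, ε j = 1 := by
    fin_cases i <;> simp [ε, Fin.prod_univ_three, Pi.mulSingle_apply]
  have hprod : ∏ j, ε j ^ m (Sum.inr j) = (-1) ^ skewDegree m * (-1) ^ m (Sum.inr i) := by
    have single : ∏ j, (Pi.mulSingle i (-1) : Fin 3 → F) j ^ m (Sum.inr j) =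
        (-1) ^ m (Sum.inr i) := by
      rw [Fintype.prod_eq_single i fun j hj => by simp [hj], Pi.mulSingle_eq_same]
    simp only [ε, Pi.neg_apply, neg_pow (Pi.mulSingle i (-1) _)]
    rw [Finset.prod_mul_distrib, Finset.prod_pow_eq_pow_sum, single, skewDegree]
  by_contra hi
  refine prod_pow_ne_neg_one_of_coeff_ne_zero h2 Function.injective_id
    (scaleRename_diagonal_restrictSlice hε hε' hp) Finsupp.mapDomain_id hm ?_
  rw [prod_sumElim_one_pow, hprod, hodd.neg_one_pow, (Nat.not_odd_iff_even.mp hi).neg_one_pow,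
    mul_one]

lemma inr_ne_inr_of_coeff_restrictSlice_ne_zero (h2 : (2 : F) ≠ 0) {p : Rpoly F d}
    (hp : p ∈ invAlg F d) {m : Fin 3 ⊕ Fin 3 →₀ ℕ} (hm : coeff m (restrictSlice p) ≠ 0)
    (hodd : Odd (skewDegree m)) {i j : Fin 3} (hij : i ≠ j)
    (hl : m (Sum.inl i) = m (Sum.inl j)) : m (Sum.inr i) ≠ m (Sum.inr j) := by
  intro hr
  let σ : Fin 3 ⊕ Fin 3 → Fin 3 ⊕ Fin 3 := Sum.map (Equiv.swap i j) (Equiv.swap i j)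
  have hσ : σ.Injective := (Equiv.injective _).sumMap (Equiv.injective _)
  have hmσ : m.mapDomain σ = m := by
    ext k
    obtain ⟨k, rfl⟩ := (Sum.map_surjective.mpr ⟨Equiv.surjective _, Equiv.surjective _⟩ :
      σ.Surjective) k
    rw [Finsupp.mapDomain_apply hσ]
    rcases k with k | k <;>
      simp only [Sum.map_inl, Sum.map_inr, Equiv.swap_apply_def] <;> split_ifs <;> simp [*]
  refine prod_pow_ne_neg_one_of_coeff_ne_zero h2 hσ
    (scaleRename_swap_restrictSlice hij hp) hmσ hm ?_
  rw [prod_sumElim_one_neg_one_pow, hodd.neg_one_pow]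

lemma six_le_degree_of_coeff_restrictSlice_ne_zero (h2 : (2 : F) ≠ 0) {p : Rpoly F d}
    (hp : p ∈ invAlg F d) {m : Fin 3 ⊕ Fin 3 →₀ ℕ} (hm : coeff m (restrictSlice p) ≠ 0)
    (hodd : Odd (skewDegree m)) : 6 ≤ m.degree := by
  have hodd' := odd_inr_of_coeff_restrictSlice_ne_zero h2 hp hm hodd
  have hne {i j : Fin 3} :=
    inr_ne_inr_of_coeff_restrictSlice_ne_zero h2 hp hm hodd (i := i) (j := j)
  obtain ⟨k₀, hk₀⟩ := hodd' 0
  obtain ⟨k₁, hk₁⟩ := hodd' 1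
  obtain ⟨k₂, hk₂⟩ := hodd' 2
  have h01 := hne (i := 0) (j := 1) (by decide)
  have h02 := hne (i := 0) (j := 2) (by decide)
  have h12 := hne (i := 1) (j := 2) (by decide)
  rw [Finsupp.degree_eq_sum, Fintype.sum_sum_type, Fin.sum_univ_three, Fin.sum_univ_three]
  omega

lemma coeff_restrictSlice_mul_eq_zero (h2 : (2 : F) ≠ 0) {p q : Rpoly F d}
    (hp : p ∈ invAlg F d) (hq : q ∈ invAlg F d) (hp0 : constantCoeff p = 0)
    (hq0 : constantCoeff q = 0) {m : Fin 3 ⊕ Fin 3 →₀ ℕ} (hdeg : m.degree ≤ 6)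
    (hodd : Odd (skewDegree m)) : coeff m (restrictSlice (p * q)) = 0 := by
  have odd_mul {p q : Rpoly F d} (hp : p ∈ invAlg F d) (hq0 : constantCoeff q = 0)
      {u v : Fin 3 ⊕ Fin 3 →₀ ℕ} (huv : (u + v).degree ≤ 6) (hu : Odd (skewDegree u)) :
      coeff u (restrictSlice p) * coeff v (restrictSlice q) = 0 := by
    by_cases hup : coeff u (restrictSlice p) = 0
    · rw [hup, zero_mul]
    have hu6 := six_le_degree_of_coeff_restrictSlice_ne_zero h2 hp hup hu
    have hv : v = 0 := by
      rw [map_add] at huv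
      exact (Finsupp.degree_eq_zero_iff v).mp (by omega)
    rw [hv, ← constantCoeff_eq, constantCoeff_restrictSlice, hq0, mul_zero]
  rw [map_mul, coeff_mul]
  refine Finset.sum_eq_zero fun ⟨u, v⟩ huv => ?_
  obtain rfl : u + v = m := Finset.HasAntidiagonal.mem_antidiagonal.mp huv
  by_cases hu : Odd (skewDegree u)
  · exact odd_mul hp hq0 hdeg hu
  · rw [mul_comm]
    rw [add_comm] at hdeg
    refine odd_mul hq hp0 hdeg ?_
    rw [skewDegree_add, Nat.odd_add'] at hodd
    exact hodd.mpr (Nat.not_odd_iff_even.mp hu)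

lemma constantCoeff_eq_zero_of_mem_plusIdeal {p : invAlg F d} (hp : p ∈ plusIdeal F d) :
    constantCoeff (p : Rpoly F d) = 0 := by
  have hle : plusIdeal F d ≤ RingHom.ker (constantCoeff.comp (invAlg F d).val.toRingHom) := by
    refine Ideal.span_le.mpr ?_
    rintro f ⟨n, hn, hf⟩
    exact hf.coeff_eq_zero (by simpa using hn.ne)
  exact hle hp

lemma coeff_restrictSlice_eq_zero_of_mem_decompSet (h2 : (2 : F) ≠ 0) {f : Rpoly F d}
    (hf : f ∈ decompSet F d) {m : Fin 3 ⊕ Fin 3 →₀ ℕ} (hdeg : m.degree ≤ 6)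
    (hodd : Odd (skewDegree m)) : coeff m (restrictSlice f) = 0 := by
  obtain ⟨f, hf, rfl⟩ := hf
  rw [SetLike.mem_coe, pow_two] at hf
  induction hf using Submodule.mul_induction_on' with
  | mem_mul_mem p hp q hq =>
    exact coeff_restrictSlice_mul_eq_zero h2 p.2 q.2 (constantCoeff_eq_zero_of_mem_plusIdeal hp)
      (constantCoeff_eq_zero_of_mem_plusIdeal hq) hdeg hodd
  | add f _ g _ hf hg =>
    rw [Subalgebra.coe_add, map_add, coeff_add, hf, hg, add_zero]

/-- The polynomial `a₀a₁a₂ (s₀ - s₁)(s₀ - s₂)(s₁ - s₂)` on the slice, a polynomial of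
lowest degree among those odd in `a` and fixed by the signed permutation matrices. -/
noncomputable def skewVandermonde (F : Type) [Field F] : MvPolynomial (Fin 3 ⊕ Fin 3) F :=
  X (.inr 0) * X (.inr 1) * X (.inr 2) *
    ((X (.inl 0) - X (.inl 1)) * (X (.inl 0) - X (.inl 2)) * (X (.inl 1) - X (.inl 2)))

lemma isHomogeneous_skewVandermonde : (skewVandermonde F).IsHomogeneous 6 := by
  have hX (i : Fin 3 ⊕ Fin 3) : (X i : MvPolynomial _ F).IsHomogeneous 1 := isHomogeneous_X F i
  exact (((hX _).mul (hX _)).mul (hX _)).mul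
    ((((hX _).sub (hX _)).mul ((hX _).sub (hX _))).mul ((hX _).sub (hX _)))

lemma skewVandermonde_ne_zero : skewVandermonde F ≠ 0 := by
  simp [skewVandermonde, sub_eq_zero, X_ne_zero, (X_injective (R := F)).eq_iff]

lemma traceWord_genericSlice_sub_scaleRename :
    traceWord (genericSlice F) - scaleRename (Sum.elim 1 (-1)) id (traceWord (genericSlice F)) =
      C 16 * skewVandermonde F := by
  have map_genericSlice : (genericSlice F).map (scaleRename (Sum.elim 1 (-1)) id) =
      diagAddSkew (X ∘ Sum.inl) (-(X ∘ Sum.inr)) := by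
    rw [← Sum.map_id_id, map_genericSlice_scaleRename]
    congr 1
    ext1 k
    simp
  rw [map_traceWord, map_genericSlice, map_ofNat]
  exact traceWord_diagAddSkew_sub _ _

lemma exists_coeff_traceWord_genericSlice_ne_zero (h2 : (2 : F) ≠ 0) :
    ∃ m : Fin 3 ⊕ Fin 3 →₀ ℕ, m.degree = 6 ∧ Odd (skewDegree m) ∧
      coeff m (traceWord (genericSlice F)) ≠ 0 := by
  obtain ⟨m, hm⟩ := exists_coeff_ne_zero (skewVandermonde_ne_zero (F := F))
  have h16 : (16 : F) ≠ 0 := by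
    rw [show (16 : F) = 2 ^ 4 by norm_num]
    exact pow_ne_zero 4 h2
  have hcoeff : (1 - (-1) ^ skewDegree m) * coeff m (traceWord (genericSlice F)) =
      16 * coeff m (skewVandermonde F) := by
    rw [← coeff_C_mul m 16, ← traceWord_genericSlice_sub_scaleRename, coeff_sub,
      coeff_scaleRename_id, prod_sumElim_one_neg_one_pow]
    ring
  have hne := hcoeff ▸ mul_ne_zero h16 hm
  refine ⟨m, ?_, ?_, right_ne_zero_of_mul hne⟩
  · rw [Finsupp.degree_eq_weight_one]
    exact isHomogeneous_skewVandermonde hm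
  · by_contra h
    exact left_ne_zero_of_mul hne (by rw [(Nat.not_odd_iff_even.mp h).neg_one_pow, sub_self])

lemma traceWord_genMat_notMem_decompSet (h2 : (2 : F) ≠ 0) (k : Fin d) :
    traceWord (genMat F d k) ∉ decompSet F d := by
  intro hmem
  obtain ⟨m, hdeg, hodd, hm⟩ := exists_coeff_traceWord_genericSlice_ne_zero h2
  refine hm ?_
  rw [← evalMatrices_traceWord_genMat (F := F) (fun _ => genericSlice F) k]
  exact coeff_restrictSlice_eq_zero_of_mem_decompSet h2 hmem hdeg.le hodd

end Slice

theorem stmt14_general (F : Type) [Field F] (h2 : ringChar F ≠ 2) (d : ℕ) (k : Fin d)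
    (X : Matrix (Fin 3) (Fin 3) (Rpoly F d)) (hX : X = genMat F d k) :
    Matrix.trace (X ^ 2 * (X - Xᵀ) ^ 2 * X * (X - Xᵀ)) ∈ invAlg F d ∧
    Matrix.trace (X ^ 2 * (X - Xᵀ) ^ 2 * X * (X - Xᵀ)) ∉ decompSet F d := by
  subst hX
  exact ⟨traceWord_genMat_mem_invAlg k,
    traceWord_genMat_notMem_decompSet (Ring.two_ne_zero h2) k⟩

/-- the invariant `tr(X² X̄² X X̄)`, where `X = X_1` and `X̄ = X - Xᵀ`,
is an indecomposable `O(3)`-invariant. -/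
theorem stmt14 (F : Type) [Field F] [Infinite F] (h2 : ringChar F ≠ 2) (d : ℕ) (hd : 1 ≤ d)
    (X : Matrix (Fin 3) (Fin 3) (Rpoly F d)) (hX : X = genMat F d ⟨0, hd⟩) :
    Matrix.trace (X ^ 2 * (X - Xᵀ) ^ 2 * X * (X - Xᵀ)) ∈ invAlg F d ∧
    Matrix.trace (X ^ 2 * (X - Xᵀ) ^ 2 * X * (X - Xᵀ)) ∉ decompSet F d := by
  exact stmt14_general F h2 d ⟨0, hd⟩ X hX
end
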